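/- Let R be a standard graded domain which is a finitely generated ℤ-algebra of characteristic 0, and let I ⊂ R be a homogeneous ideal of finite colength, such that for almost all primes p the fiber R_p = R ⊗_ℤ ℤ/pℤ is a standard graded ring of dimension d which is geometrically integral and I_p ⊂ R_p is a homogeneous ideal of finite colength. Then for any fixed m ≥ d−1, lim_{p→∞} [ e_{HK}(R_p, I_p) − ℓ(R_p/I_p^{[p^m]}) / p^{md} ] = 0. In particular, for any fixed m ≥ d−1, the limit e_{HK}^∞(R, I) := lim_{p→∞} e_{HK}(R_p, I_p) exists if and only if lim_{p→∞} ℓ(R_p/I_p^{[p^m]}) / p^{md} exists, and when they exist the two limits are equal. -/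

import Mathlib

/-!
Statement 4 (Corollary 1.2(2)): for a standard graded domain `R` which is a
finitely generated `ℤ`-algebra of characteristic `0` and a homogeneous ideal
`I ⊂ R` of finite colength whose fibers `(R_p, I_p)` are standard graded of
dimension `d`, geometrically integral and of finite colength for almost all
primes `p`: for any fixed `m ≥ d − 1`,
`lim_{p→∞} [e_HK(R_p, I_p) − ℓ(R_p/I_p^{[pᵐ]})/p^{md}] = 0`; in particular
`e_HK^∞(R,I) := lim_{p→∞} e_HK(R_p, I_p)` exists iff
`lim_{p→∞} ℓ(R_p/I_p^{[pᵐ]})/p^{md}` exists, and then the two limits coincide.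
-/

open Filter

/-- The Frobenius power `I^{[q]}`: the ideal generated by `q`-th powers of
elements of `I`. -/
def Ideal.frobeniusPower {R : Type*} [CommRing R] (I : Ideal R) (q : ℕ) : Ideal R :=
  Ideal.span ((fun x => x ^ q) '' (I : Set R))

/-- The fiber `R_p = R ⊗_ℤ ℤ/pℤ`, realized as `R ⧸ (p)`. -/
abbrev modPFiber (R : Type*) [CommRing R] (p : ℕ) : Type _ :=
  R ⧸ (Ideal.span {(p : R)} : Ideal R)

/-- The image `I_p` of an ideal `I ⊆ R` in the fiber `R_p`. -/
def modPFiberIdeal {R : Type*} [CommRing R] (I : Ideal R) (p : ℕ) :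
    Ideal (modPFiber R p) :=
  I.map (Ideal.Quotient.mk _)

open Classical in
/-- The colength `ℓ(R_p/J)` of an ideal `J` in the fiber `R_p`, i.e. its
length as a `ℤ/pℤ`-module (junk value `0` if `R_p` does not have
characteristic `p`). -/
noncomputable def fiberColength {R : Type*} [CommRing R] (p : ℕ)
    (J : Ideal (modPFiber R p)) : ℕ :=
  if h : CharP (modPFiber R p) p then
    letI := h
    letI : Algebra (ZMod p) (modPFiber R p) := ZMod.algebra _ p
    Module.finrank (ZMod p) (modPFiber R p ⧸ J)
  else 0

/-- The fiber `R_p` is geometrically integral, i.e. `R_p ⊗ \bar𝔽_p` is a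
domain. -/
def ModPFiberGeomIntegral (R : Type*) [CommRing R] (p : ℕ) [Fact p.Prime]
    [CharP (modPFiber R p) p] : Prop :=
  letI : Algebra (ZMod p) (modPFiber R p) := ZMod.algebra _ p
  IsDomain (TensorProduct (ZMod p) (AlgebraicClosure (ZMod p)) (modPFiber R p))

/-- Convergence of `g p` to `L` as the prime `p` tends to infinity. -/
def TendstoPrimes (g : ℕ → ℝ) (L : ℝ) : Prop :=
  ∀ ε : ℝ, 0 < ε → ∃ N : ℕ, ∀ p : ℕ, p.Prime → N ≤ p → |g p - L| < ε

/-!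
Noether normalization of `R` away from an integer gives algebraically independent
`z₁, …, z_d ∈ R` and, from the discriminants of the equations satisfied by the generators, a single
`c ∈ R` that does not depend on `p`. For almost all `p` the element `c ^ p` multiplies `R_p` into
the sum of the `R_p ^ p · z ^ α` with `0 ≤ α_i < p`, and this sum is direct. Hence `R_p ^ (p ^ d)`
and `R_p`, the latter being a module via Frobenius, agree up to modules supported on `R_p / c`, and
the lengths `ℓ(R_p / I_p^[p^(n+1)])` and `p ^ d ℓ(R_p / I_p^[p^n])` differ by at most twice `p ^ d`
times a colength in `R_p / c`. A Noether normalization of `R / c` bounds such colengths by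
`C p ^ (n (d - 1))`, with `C` independent of `p` and `n`. After division by `p ^ ((n + 1) d)` the
error is `O(p ^ (-n))`; summing the geometric series from `n = m` shows that `e_HK(R_p, I_p)` is
within `O(p ^ (-m))` of `ℓ(R_p / I_p^[p^m]) / p ^ (m d)`, uniformly in `p`.
-/

namespace HilbertKunz

section Discriminant

open Polynomial

lemma discr_map_of_monic {R S : Type*} [CommRing R] [CommRing S] [Nontrivial S] {f : R[X]}
    (hf : f.Monic) (φ : R →+* S) : (f.map φ).discr = φ f.discr := by
  rcases f.natDegree.eq_zero_or_pos with h0 | hpos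
  · rw [hf.natDegree_eq_zero.1 h0, Polynomial.map_one, ← C_1, ← C_1, discr_C, discr_C, map_one]
  have hdeg : (f.map φ).natDegree = f.natDegree := hf.natDegree_map φ
  have hf' := resultant_deriv (natDegree_pos_iff_degree_pos.1 hpos)
  have hφ := resultant_deriv (natDegree_pos_iff_degree_pos.1 (hdeg.symm ▸ hpos))
  rw [hf.leadingCoeff, mul_one] at hf'
  rw [derivative_map, hdeg, resultant_map_map, hf', (hf.map φ).leadingCoeff, mul_one, map_mul,
    map_pow, map_neg, map_one] at hφ
  exact ((isUnit_one.neg.pow _).mul_right_inj.1 hφ).symm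

lemma eval_derivative_prod_X_sub_C {R ι : Type*} [CommRing R] [Fintype ι] [DecidableEq ι]
    (θ : ι → R) (i : ι) :
    eval (θ i) (derivative (∏ j, (X - C (θ j)))) = ∏ j ∈ {i}ᶜ, (θ i - θ j) := by
  simp only [derivative_prod_finset, derivative_sub, derivative_X, derivative_C, sub_zero, mul_one,
    eval_finsetSum, eval_prod, eval_sub, eval_X, eval_C]
  rw [Finset.sum_eq_single i, Finset.compl_singleton]
  · exact fun j _ hj => Finset.prod_eq_zero (Finset.mem_erase.2 ⟨hj.symm, Finset.mem_univ _⟩)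
      (sub_self _)
  · simp

lemma prod_prod_compl_sub_eq_det_vandermonde {R : Type*} [CommRing R] {n : ℕ} (θ : Fin n → R) :
    ∏ i, ∏ j ∈ {i}ᶜ, (θ i - θ j) =
      (-1) ^ (n * (n - 1) / 2) * (Matrix.vandermonde θ).det ^ 2 := by
  have hsign : n * (n - 1) / 2 = ∑ i : Fin n, (Finset.Ioi i).card := by
    simp only [Fin.card_Ioi, Nat.sub_sub]
    rw [Finset.sum_fin_eq_sum_range, ← Finset.sum_range_id_mul_two,
      Nat.mul_div_cancel _ two_pos, ← Finset.sum_range_reflect]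
    exact Finset.sum_congr rfl fun i hi => by
      rw [dif_pos (Finset.mem_range.1 hi), Nat.sub_sub]
  rw [hsign, ← Finset.prod_pow_eq_pow_sum, Matrix.det_vandermonde, ← Finset.prod_pow,
    ← Finset.prod_mul_distrib,
    ← Finset.prod_prod_Ioi_mul_eq_prod_prod_off_diag fun j i => θ i - θ j]
  refine Finset.prod_congr rfl fun i _ => ?_
  rw [← Finset.prod_const, ← Finset.prod_pow, ← Finset.prod_mul_distrib]
  exact Finset.prod_congr rfl fun j _ => by ring

lemma discr_prod_X_sub_C {R : Type*} [CommRing R] [Nontrivial R] {n : ℕ} (θ : Fin n → R) :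
    discr (∏ i, (X - C (θ i))) = (Matrix.vandermonde θ).det ^ 2 := by
  rcases n.eq_zero_or_pos with rfl | hn
  · rw [Fin.prod_univ_zero, ← C_1, discr_C]
    simp
  have hmonic : (∏ i, (X - C (θ i))).Monic := monic_prod_X_sub_C θ Finset.univ
  have hdeg : (∏ i, (X - C (θ i))).natDegree = n := by
    simp [natDegree_prod_of_monic _ _ fun i _ => monic_X_sub_C (θ i)]
  have hres := resultant_deriv (natDegree_pos_iff_degree_pos.1 (hdeg.symm ▸ hn))
  rw [hmonic.leadingCoeff, mul_one,
    resultant_prod_left _ _ _ _ (by simp) (natDegree_derivative_le _), hdeg] at hres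
  have hfactor : ∀ i, (X - C (θ i)).resultant (derivative (∏ j, (X - C (θ j))))
      (X - C (θ i)).natDegree (n - 1) = ∏ j ∈ {i}ᶜ, (θ i - θ j) := fun i => by
    rw [natDegree_X_sub_C, resultant_X_sub_C_left _ _ _
      ((natDegree_derivative_le _).trans_eq (by rw [hdeg])), eval_derivative_prod_X_sub_C]
  rw [Finset.prod_congr rfl fun i _ => hfactor i, prod_prod_compl_sub_eq_det_vandermonde] at hres
  exact ((isUnit_one.neg.pow _).mul_right_inj.1 hres).symm

lemma pow_eq_sum_coeff_modByMonic {S T : Type*} [CommRing S] [CommRing T] [Algebra S T]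
    {g : S[X]} (hg : g.Monic) {t : T} (ht : aeval t g = 0) (n : ℕ) :
    t ^ n = ∑ k : Fin g.natDegree, (X ^ n %ₘ g).coeff k • t ^ (k : ℕ) := by
  nontriviality T
  have : Nontrivial S := Module.nontrivial S T
  have hg1 : g ≠ 1 := by
    rintro rfl
    simp at ht
  have hmod : aeval t (X ^ n %ₘ g) = t ^ n := by
    simpa [ht] using congrArg (aeval t) (modByMonic_add_div (X ^ n : S[X]) g)
  rw [← hmod, aeval_eq_sum_range' (natDegree_modByMonic_lt _ hg hg1), Finset.sum_range]

/-- The matrix expressing `1, t ^ p, t ^ (2 * p), …` in terms of `1, t, t ^ 2, …`, where `t` is a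
root of the monic polynomial `g`: its entries are the coefficients of `X ^ (p * i)` modulo `g`. -/
noncomputable def powMatrix {S : Type*} [CommRing S] (p : ℕ) (g : S[X]) :
    Matrix (Fin g.natDegree) (Fin g.natDegree) S :=
  Matrix.of fun i k => (X ^ (p * i) %ₘ g).coeff k

lemma pow_pow_eq_sum_powMatrix {S T : Type*} [CommRing S] [CommRing T] [Algebra S T] (p : ℕ)
    {g : S[X]} (hg : g.Monic) {t : T} (ht : aeval t g = 0) (i : Fin g.natDegree) :
    (t ^ (i : ℕ)) ^ p = ∑ k, powMatrix p g i k • t ^ (k : ℕ) := by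
  rw [← pow_mul, mul_comm]
  exact pow_eq_sum_coeff_modByMonic hg ht _

-- Evaluating the relations at the roots `θ` of `g` gives `V(θ) ^ p = V(θ) * det (powMatrix p g)`
-- for the Vandermonde determinant `V`, whose square is the discriminant.
lemma discr_pow_char {S : Type*} [CommRing S] [IsDomain S] (p : ℕ) [Fact p.Prime] [CharP S p]
    {g : S[X]} (hg : g.Monic) : g.discr ^ p = (powMatrix p g).det ^ 2 * g.discr := by
  let K := AlgebraicClosure (FractionRing S)
  have hinj : Function.Injective (algebraMap S K) := by
    rw [IsScalarTower.algebraMap_eq S (FractionRing S) K]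
    exact (algebraMap (FractionRing S) K).injective.comp (IsFractionRing.injective S _)
  have : CharP K p := charP_of_injective_algebraMap hinj p
  obtain ⟨θ, hθ⟩ : ∃ θ : Fin g.natDegree → K, g.map (algebraMap S K) = ∏ i, (X - C (θ i)) := by
    have hsplits := IsAlgClosed.splits (g.map (algebraMap S K))
    obtain ⟨l, hl⟩ := Quot.exists_rep (g.map (algebraMap S K)).roots
    have hlen : l.length = g.natDegree := by
      rw [← hg.natDegree_map (algebraMap S K), hsplits.natDegree_eq_card_roots, ← hl]
      rfl
    rw [← hlen]
    refine ⟨l.get, ?_⟩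
    rw [hsplits.eq_prod_roots_of_monic (hg.map _), ← hl]
    exact (Fin.prod_univ_fun_getElem l fun θ => X - C θ).symm
  have hroot (i) : aeval (θ i) g = 0 := by
    rw [← eval_map_algebraMap, hθ, eval_prod]
    exact Finset.prod_eq_zero (Finset.mem_univ i) (by simp)
  have hV : (Matrix.vandermonde θ).map (frobenius K p) =
      Matrix.vandermonde θ * ((algebraMap S K).mapMatrix (powMatrix p g)).transpose := by
    ext i k
    simp [Matrix.mul_apply, Matrix.vandermonde_apply, frobenius_def,
      pow_pow_eq_sum_powMatrix p hg (hroot i), Algebra.smul_def, mul_comm]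
  have hdet := congrArg Matrix.det hV
  rw [Matrix.det_mul, Matrix.det_transpose, ← RingHom.map_det, ← RingHom.mapMatrix_apply,
    ← RingHom.map_det, frobenius_def] at hdet
  apply hinj
  rw [map_pow, map_mul, map_pow, ← discr_map_of_monic hg, hθ, discr_prod_X_sub_C, pow_right_comm,
    hdet]
  ring

lemma det_powMatrix_smul_pow_mem {S T : Type*} [CommRing S] [CommRing T] [Algebra S T] (p : ℕ)
    {g : S[X]} (hg : g.Monic) {t : T} (ht : aeval t g = 0) {E : Submodule S T}
    (hE : ∀ i : ℕ, (t ^ i) ^ p ∈ E) (n : ℕ) : (powMatrix p g).det • t ^ n ∈ E := by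
  have hcramer (k : Fin g.natDegree) :
      (powMatrix p g).det • t ^ (k : ℕ) =
        ∑ i, (powMatrix p g).adjugate k i • (t ^ (i : ℕ)) ^ p := by
    simp_rw [pow_pow_eq_sum_powMatrix p hg ht, Finset.smul_sum, smul_smul]
    rw [Finset.sum_comm]
    simp_rw [← Finset.sum_smul, ← Matrix.mul_apply, Matrix.adjugate_mul, Matrix.smul_apply,
      Matrix.one_apply]
    simp
  rw [pow_eq_sum_coeff_modByMonic hg ht n, Finset.smul_sum]
  refine Submodule.sum_mem _ fun k _ => ?_
  rw [smul_comm, hcramer]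
  exact Submodule.smul_mem _ _ (Submodule.sum_mem _ fun i _ => Submodule.smul_mem _ _ (hE i))

lemma discr_pow_smul_pow_mem {S T : Type*} [CommRing S] [IsDomain S] [CommRing T] [Algebra S T]
    (p : ℕ) [Fact p.Prime] [CharP S p] {g : S[X]} (hg : g.Monic) {t : T} (ht : aeval t g = 0)
    {E : Submodule S T} (hE : ∀ i : ℕ, (t ^ i) ^ p ∈ E) (n : ℕ) : g.discr ^ p • t ^ n ∈ E := by
  rw [discr_pow_char p hg, sq, mul_assoc, mul_comm, mul_smul]
  exact Submodule.smul_mem _ _ (det_powMatrix_smul_pow_mem p hg ht hE n)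

lemma prod_discr_pow_smul_mem {S A ι : Type*} [CommRing S] [IsDomain S] [CommRing A]
    [Algebra S A] [Fintype ι] (p : ℕ) [Fact p.Prime] [CharP S p] (T : Subalgebra S A)
    (hT : ∀ a : A, a ^ p ∈ T) {v : ι → A} (hv : Algebra.adjoin S (Set.range v) = ⊤)
    {g : ι → S[X]} (hg : ∀ i, (g i).Monic) (hroot : ∀ i, aeval (v i) (g i) = 0) (a : A) :
    (∏ i, (g i).discr) ^ p • a ∈ T := by
  obtain ⟨P, rfl⟩ : a ∈ (MvPolynomial.aeval (R := S) v).range := by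
    rw [← Algebra.adjoin_range_eq_range_aeval, hv]
    trivial
  induction P using MvPolynomial.induction_on' with
  | monomial m t =>
    change _ • MvPolynomial.aeval v _ ∈ _
    rw [MvPolynomial.aeval_monomial, Finsupp.prod_fintype _ _ (by simp), ← Algebra.smul_def,
      smul_comm, ← Finset.prod_pow, ← Finset.prod_smul]
    exact T.smul_mem (T.prod_mem fun i _ => discr_pow_smul_pow_mem p (hg i) (hroot i)
      (E := T.toSubmodule) (fun _ => hT _) (m i)) t
  | add P Q hP hQ =>
    rw [map_add, smul_add]
    exact T.add_mem hP hQ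

end Discriminant

section FrobeniusMap

open Polynomial

lemma prod_X_pow_eq_monomial {R ι : Type*} [CommSemiring R] [Fintype ι] (e : ι → ℕ) :
    ∏ i, (MvPolynomial.X i : MvPolynomial ι R) ^ e i =
      MvPolynomial.monomial (Finsupp.equivFunOnFinite.symm e) 1 := by
  simp [MvPolynomial.monomial_eq, Finsupp.prod_fintype]

lemma coeff_pow_mul_prod_X_pow (p : ℕ) [Fact p.Prime] {ι : Type*} [Fintype ι]
    (f : MvPolynomial ι (ZMod p)) (α β : ι → Fin p) (γ : ι →₀ ℕ) :
    MvPolynomial.coeff (p • γ + Finsupp.equivFunOnFinite.symm fun i => (α i : ℕ))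
      (f ^ p * ∏ i, MvPolynomial.X i ^ (β i : ℕ)) =
      if β = α then MvPolynomial.coeff γ f else 0 := by
  rw [prod_X_pow_eq_monomial, ← MvPolynomial.expand_zmod]
  split_ifs with hβ
  · rw [hβ, MvPolynomial.coeff_mul_monomial, mul_one,
      MvPolynomial.coeff_expand_smul _ (Fact.out : p.Prime).ne_zero]
  · obtain ⟨i, hi⟩ := Function.ne_iff.1 hβ
    rw [MvPolynomial.coeff_mul_monomial', mul_one]
    refine ite_eq_right_iff.2 fun hle => MvPolynomial.coeff_expand_of_not_dvd _ (i := i) ?_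
    intro hdvd
    have hmod : (β i : ℕ) ≡ p * γ i + α i [MOD p] := (Nat.modEq_iff_dvd' (hle i)).2 hdvd
    rw [Nat.ModEq, Nat.mul_add_mod, Nat.mod_eq_of_lt (β i).2, Nat.mod_eq_of_lt (α i).2] at hmod
    exact hi (Fin.ext hmod)

variable (p : ℕ) [Fact p.Prime] {ι : Type*} [Fintype ι] [DecidableEq ι]
  {A : Type*} [CommRing A] [Algebra (ZMod p) A] [CharP A p]

/-- The map `A ^ (p ^ |ι|) → A` sending `(a_α)` to `∑ a_α ^ p z ^ α`, where `α` runs through the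
exponents with entries in `{0, …, p - 1}`. It is an isomorphism when `A` is the polynomial ring
in the variables `z`, and close to one when `A` is finite over such a polynomial ring. -/
def frobMap (z : ι → A) : ((ι → Fin p) → A) →ₗ[ZMod p] A where
  toFun a := ∑ α, a α ^ p * ∏ i, z i ^ (α i : ℕ)
  map_add' a b := by simp only [Pi.add_apply, add_pow_char, add_mul, Finset.sum_add_distrib]
  map_smul' t a := by
    simp only [Pi.smul_apply, _root_.smul_pow, ZMod.pow_card, smul_mul_assoc, Finset.smul_sum,
      RingHom.id_apply]

lemma frobMap_apply (z : ι → A) (a : (ι → Fin p) → A) :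
    frobMap p z a = ∑ α, a α ^ p * ∏ i, z i ^ (α i : ℕ) := rfl

lemma frobMap_smul (z : ι → A) (b : A) (a : (ι → Fin p) → A) :
    frobMap p z (b • a) = b ^ p * frobMap p z a := by
  simp [frobMap_apply, Finset.mul_sum, mul_pow, mul_assoc]

lemma frobMap_comp_ringHom {B : Type*} [CommRing B] [Algebra (ZMod p) B] [CharP B p]
    (f : A →+* B) (z : ι → A) (a : (ι → Fin p) → A) :
    frobMap p (f ∘ z) (f ∘ a) = f (frobMap p z a) := by
  simp [frobMap_apply]

lemma pow_mul_prod_pow_mem_range_frobMap (z : ι → A) (b : A) (β : ι → ℕ) :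
    b ^ p * ∏ i, z i ^ β i ∈ (frobMap p z).range := by
  have hp : 0 < p := (Fact.out : p.Prime).pos
  refine ⟨Pi.single (fun i => ⟨β i % p, Nat.mod_lt _ hp⟩) (b * ∏ i, z i ^ (β i / p)), ?_⟩
  rw [frobMap_apply, Finset.sum_eq_single fun i => ⟨β i % p, Nat.mod_lt _ hp⟩]
  · rw [Pi.single_eq_same, mul_pow, mul_assoc, ← Finset.prod_pow, ← Finset.prod_mul_distrib]
    congr! 2 with i
    rw [← pow_mul, ← pow_add, mul_comm, Nat.div_add_mod]
  · intro α _ hα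
    rw [Pi.single_eq_of_ne hα, zero_pow hp.ne', zero_mul]
  · simp

lemma mul_mem_range_frobMap (z : ι → A) {x y : A} (hx : x ∈ (frobMap p z).range)
    (hy : y ∈ (frobMap p z).range) : x * y ∈ (frobMap p z).range := by
  obtain ⟨a, rfl⟩ := hx
  obtain ⟨b, rfl⟩ := hy
  rw [frobMap_apply, frobMap_apply, Finset.sum_mul_sum]
  refine Submodule.sum_mem _ fun α _ => Submodule.sum_mem _ fun β _ => ?_
  convert! pow_mul_prod_pow_mem_range_frobMap p z (a α * b β) fun i => α i + β i using 1
  simp only [mul_pow, pow_add, Finset.prod_mul_distrib]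
  ring

lemma pow_char_mem_range_frobMap (z : ι → A) (b : A) : b ^ p ∈ (frobMap p z).range := by
  simpa using pow_mul_prod_pow_mem_range_frobMap p z b 0

lemma aeval_mem_range_frobMap (z : ι → A) (f : MvPolynomial ι (ZMod p)) :
    MvPolynomial.aeval z f ∈ (frobMap p z).range := by
  induction f using MvPolynomial.induction_on with
  | C t =>
    rw [← MvPolynomial.algebraMap_eq, AlgHom.commutes, ← ZMod.pow_card t, map_pow]
    exact pow_char_mem_range_frobMap p z _
  | add f g hf hg =>
    rw [map_add]
    exact Submodule.add_mem _ hf hg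
  | mul_X f i hf =>
    rw [map_mul, MvPolynomial.aeval_X]
    refine mul_mem_range_frobMap p z hf ?_
    have hz := pow_mul_prod_pow_mem_range_frobMap p z 1 (Pi.single i 1)
    rwa [one_pow, one_mul, Fintype.prod_eq_single i fun j hj => by
      rw [Pi.single_eq_of_ne hj, pow_zero], Pi.single_eq_same, pow_one] at hz

lemma prod_discr_pow_mul_mem_range_frobMap {κ : Type*} [Fintype κ] (z : ι → A) {v : κ → A}
    (hv : Algebra.adjoin (ZMod p) (Set.range v) = ⊤) {g : κ → (MvPolynomial ι (ZMod p))[X]}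
    (hg : ∀ i, (g i).Monic)
    (hroot : ∀ i, (g i).eval₂ (MvPolynomial.aeval z : _ →ₐ[ZMod p] A).toRingHom (v i) = 0)
    (a : A) :
    MvPolynomial.aeval z (∏ i, (g i).discr) ^ p * a ∈ (frobMap p z).range := by
  algebraize [(MvPolynomial.aeval z : _ →ₐ[ZMod p] A).toRingHom]
  have : IsScalarTower (ZMod p) (MvPolynomial ι (ZMod p)) A :=
    IsScalarTower.of_algHom (MvPolynomial.aeval z)
  have hvS : Algebra.adjoin (MvPolynomial ι (ZMod p)) (Set.range v) = ⊤ := by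
    have hle : Algebra.adjoin (ZMod p) (Set.range v) ≤
        (Algebra.adjoin (MvPolynomial ι (ZMod p)) (Set.range v)).restrictScalars (ZMod p) :=
      Algebra.adjoin_le Algebra.subset_adjoin
    exact eq_top_iff.2 fun x _ => hle (hv ▸ trivial)
  let T : Subalgebra (MvPolynomial ι (ZMod p)) A :=
    { carrier := (frobMap p z).range
      mul_mem' := mul_mem_range_frobMap p z
      add_mem' := Submodule.add_mem _
      algebraMap_mem' := aeval_mem_range_frobMap p z }
  have hmem := prod_discr_pow_smul_mem p T (pow_char_mem_range_frobMap p z) hvS hg hroot a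
  rwa [Algebra.smul_def, map_pow] at hmem

lemma frobMap_X_injective :
    Function.Injective (frobMap p (MvPolynomial.X : ι → MvPolynomial ι (ZMod p))) := by
  rw [← LinearMap.ker_eq_bot, LinearMap.ker_eq_bot']
  intro a ha
  ext α γ
  have hcoeff := congrArg
    (MvPolynomial.coeff (p • γ + Finsupp.equivFunOnFinite.symm fun i => (α i : ℕ))) ha
  simpa [frobMap_apply, MvPolynomial.coeff_sum, coeff_pow_mul_prod_X_pow] using hcoeff

end FrobeniusMap

section FrobeniusMapInjective

variable {p : ℕ} [Fact p.Prime] {ι : Type*} [Fintype ι] [DecidableEq ι]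

lemma frobMap_injective_of_comp {A B : Type*} [CommRing A] [Algebra (ZMod p) A] [CharP A p]
    [CommRing B] [Algebra (ZMod p) B] [CharP B p] {f : A →+* B} (hf : Function.Injective f)
    {z : ι → A} (h : Function.Injective (frobMap p (f ∘ z))) :
    Function.Injective (frobMap p z) := fun a b hab =>
  hf.comp_left (h (by rw [frobMap_comp_ringHom, frobMap_comp_ringHom, hab]))

lemma frobMap_injective_of_isFractionRing {S : Type*} (L : Type*) [CommRing S] [IsDomain S]
    [Algebra (ZMod p) S] [CharP S p] [CommRing L] [Algebra (ZMod p) L] [CharP L p] [Algebra S L]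
    [IsFractionRing S L] {z : ι → S} (h : Function.Injective (frobMap p z)) :
    Function.Injective (frobMap p (algebraMap S L ∘ z)) := by
  rw [← LinearMap.ker_eq_bot, LinearMap.ker_eq_bot']
  intro a ha
  obtain ⟨t, ht⟩ := IsLocalization.exist_integer_multiples_of_finite (nonZeroDivisors S) a
  choose b hb using ht
  have hmul : algebraMap S L ∘ b = algebraMap S L t • a := funext fun α => by
    rw [Function.comp_apply, hb, Pi.smul_apply, Algebra.smul_def, smul_eq_mul]
  have hzero : algebraMap S L (frobMap p z b) = 0 := by
    rw [← frobMap_comp_ringHom, hmul, frobMap_smul, ha, mul_zero]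
  rw [map_eq_zero_iff _ (IsFractionRing.injective S L), ← map_zero (frobMap p z), h.eq_iff] at hzero
  funext α
  have hα : algebraMap S L t * a α = 0 := by
    rw [← smul_eq_mul, ← Pi.smul_apply, ← hmul, hzero]
    simp
  exact ((IsLocalization.map_units L t).mul_right_eq_zero).1 hα

lemma frobMap_surjective_of_isFractionRing {A : Type*} (K : Type*) [CommRing A] [IsDomain A]
    [Algebra (ZMod p) A] [CharP A p] [Field K] [Algebra (ZMod p) K] [CharP K p] [Algebra A K]
    [IsFractionRing A K] {z : ι → A} {c : A} (hc : c ≠ 0)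
    (hcA : ∀ a, c ^ p * a ∈ (frobMap p z).range) :
    Function.Surjective (frobMap p (algebraMap A K ∘ z)) := by
  intro x
  obtain ⟨a, t, ht, rfl⟩ := IsFractionRing.div_surjective (A := A) x
  obtain ⟨b, hb⟩ := hcA (a * t ^ (p - 1))
  have hp : p - 1 + 1 = p := Nat.succ_pred_prime Fact.out
  have hc' : algebraMap A K c ≠ 0 := IsFractionRing.to_map_ne_zero_of_mem_nonZeroDivisors
    (mem_nonZeroDivisors_of_ne_zero hc)
  have ht' : algebraMap A K t ≠ 0 := IsFractionRing.to_map_ne_zero_of_mem_nonZeroDivisors ht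
  refine ⟨(algebraMap A K (c * t))⁻¹ • (algebraMap A K ∘ b), ?_⟩
  have hpow : algebraMap A K t ^ p = algebraMap A K t ^ (p - 1) * algebraMap A K t := by
    rw [← pow_succ, hp]
  rw [frobMap_smul, frobMap_comp_ringHom, hb, map_mul, map_mul, map_mul, map_pow, map_pow, inv_pow,
    mul_pow, hpow]
  field_simp

section Field

variable {L K : Type*} [Field L] [Algebra (ZMod p) L] [CharP L p] [Field K]
  [Algebra (ZMod p) K] [CharP K p] [Algebra L K]

lemma frobMap_eq_sum_basis {κ : Type*} [Fintype κ] (e : Module.Basis κ L K) (z : ι → L)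
    (a : (ι → Fin p) → K) :
    frobMap p (algebraMap L K ∘ z) a =
      ∑ k, frobMap p z (fun α => e.repr (a α) k) • e k ^ p := by
  have hpow (α) : a α ^ p = ∑ k, e.repr (a α) k ^ p • e k ^ p := by
    conv_lhs => rw [← e.sum_repr (a α), sum_pow_char]
    simp only [_root_.smul_pow]
  simp only [frobMap_apply, hpow, Finset.sum_mul, Finset.sum_smul]
  rw [Finset.sum_comm]
  simp [Algebra.smul_def, mul_right_comm]

lemma linearIndependent_pow_char_of_frobMap_surjective {κ : Type*} [Finite κ]
    (e : Module.Basis κ L K) {z : ι → L}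
    (h : Function.Surjective (frobMap p (algebraMap L K ∘ z))) :
    LinearIndependent L fun k => e k ^ p := by
  have := Fintype.ofFinite κ
  refine linearIndependent_of_top_le_span_of_card_eq_finrank (fun x _ => ?_)
    (Module.finrank_eq_card_basis e).symm
  obtain ⟨a, rfl⟩ := h x
  rw [frobMap_eq_sum_basis e]
  exact Submodule.sum_mem _ fun k _ => Submodule.smul_mem _ _ (Submodule.subset_span ⟨k, rfl⟩)

lemma frobMap_injective_of_surjective [FiniteDimensional L K] {z : ι → L}
    (hinj : Function.Injective (frobMap p z))
    (hsurj : Function.Surjective (frobMap p (algebraMap L K ∘ z))) :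
    Function.Injective (frobMap p (algebraMap L K ∘ z)) := by
  rw [← LinearMap.ker_eq_bot, LinearMap.ker_eq_bot']
  intro a ha
  let e := Module.finBasis L K
  rw [frobMap_eq_sum_basis e] at ha
  have hcoord (k) := Fintype.linearIndependent_iff.1
    (linearIndependent_pow_char_of_frobMap_surjective e hsurj) _ ha k
  funext α
  refine e.ext_elem fun k => ?_
  rw [Pi.zero_apply, map_zero]
  exact congrFun (hinj ((hcoord k).trans (map_zero _).symm)) α

end Field

-- Over the fraction field `L` of the polynomial ring in the variables `z`, the map is injective,
-- and over the fraction field `K` of `A` it is surjective; both transfer to injectivity over `K`.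
lemma frobMap_injective {A : Type*} [CommRing A] [IsDomain A] [Algebra (ZMod p) A] [CharP A p]
    {z : ι → A} (hz : AlgebraicIndependent (ZMod p) z)
    (hint : (MvPolynomial.aeval z : _ →ₐ[ZMod p] A).toRingHom.Finite) {c : A} (hc : c ≠ 0)
    (hcA : ∀ a, c ^ p * a ∈ (frobMap p z).range) : Function.Injective (frobMap p z) := by
  let S := MvPolynomial ι (ZMod p)
  let : Algebra S A := (MvPolynomial.aeval z : _ →ₐ[ZMod p] A).toRingHom.toAlgebra
  have : Module.Finite S A := hint
  have : FaithfulSMul S A := (faithfulSMul_iff_algebraMap_injective S A).2 hz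
  let L := FractionRing S
  let K := FractionRing A
  let : Algebra L K := FractionRing.liftAlgebra S K
  have : IsScalarTower S L K := FractionRing.isScalarTower_liftAlgebra S K
  have : FiniteDimensional L K := .of_isLocalization S A (nonZeroDivisors S)
  have hL := frobMap_injective_of_isFractionRing L (frobMap_X_injective p (ι := ι))
  have hK := frobMap_surjective_of_isFractionRing K hc hcA
  have hzL : algebraMap L K ∘ algebraMap S L ∘ MvPolynomial.X = algebraMap A K ∘ z := by
    funext i
    rw [Function.comp_apply, Function.comp_apply, ← IsScalarTower.algebraMap_apply,
      IsScalarTower.algebraMap_apply S A K]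
    exact congrArg (algebraMap A K) (MvPolynomial.aeval_X z i)
  rw [← hzL] at hK
  have := frobMap_injective_of_surjective hL hK
  rw [hzL] at this
  exact frobMap_injective_of_comp (IsFractionRing.injective A K) this

end FrobeniusMapInjective

section Colength

variable {k : Type*} [Field k]

-- A map `V / U → W / U'` has cokernel a quotient of `W / T` as soon as `T ≤ U' + im f`.
lemma finrank_quotient_le_add {V W : Type*} [AddCommGroup V] [Module k V] [AddCommGroup W]
    [Module k W] (f : V →ₗ[k] W) {U : Submodule k V} {U' T : Submodule k W} (hU : U ≤ U'.comap f)
    (hT : T ≤ U' ⊔ f.range) [FiniteDimensional k (V ⧸ U)] [FiniteDimensional k (W ⧸ U')]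
    [FiniteDimensional k (W ⧸ T)] :
    Module.finrank k (W ⧸ U') ≤ Module.finrank k (V ⧸ U) + Module.finrank k (W ⧸ T) := by
  let g : V ⧸ U →ₗ[k] W ⧸ U' := U.mapQ U' f hU
  have hT' : T ≤ (g.range.mkQ ∘ₗ U'.mkQ).ker := by
    refine hT.trans (sup_le ?_ ?_)
    · intro x hx
      simp [(Submodule.Quotient.mk_eq_zero U').2 hx]
    · rintro _ ⟨v, rfl⟩
      rw [LinearMap.mem_ker, LinearMap.comp_apply, Submodule.mkQ_apply, Submodule.mkQ_apply,
        Submodule.Quotient.mk_eq_zero]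
      exact ⟨U.mkQ v, by simp [g]⟩
  have hsurj : Function.Surjective (T.liftQ _ hT') := by
    rw [← LinearMap.range_eq_top, Submodule.range_liftQ, LinearMap.range_eq_top]
    exact (Submodule.mkQ_surjective _).comp (Submodule.mkQ_surjective _)
  rw [← Submodule.finrank_quotient_add_finrank g.range, add_comm]
  exact add_le_add (LinearMap.finrank_range_le g)
    (LinearMap.finrank_le_finrank_of_surjective hsurj)

lemma finrank_quotient_pi_const {M κ : Type*} [AddCommGroup M] [Module k M] [Fintype κ]
    (U : Submodule k M) [FiniteDimensional k (M ⧸ U)] :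
    Module.finrank k ((κ → M) ⧸ Submodule.pi Set.univ fun _ : κ => U) =
      Fintype.card κ * Module.finrank k (M ⧸ U) := by
  classical
  rw [(Submodule.quotientPi fun _ : κ => U).finrank_eq, Module.finrank_pi_fintype]
  simp

instance finiteDimensional_quotient_pi_const {M κ : Type*} [AddCommGroup M] [Module k M]
    [Finite κ] (U : Submodule k M) [FiniteDimensional k (M ⧸ U)] :
    FiniteDimensional k ((κ → M) ⧸ Submodule.pi Set.univ fun _ : κ => U) := by
  classical
  have := Fintype.ofFinite κ
  exact Module.Finite.equiv (Submodule.quotientPi fun _ : κ => U).symm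

variable {A : Type*} [CommRing A] [Algebra k A]

lemma finrank_quotient_restrictScalars (J : Ideal A) :
    Module.finrank k (A ⧸ J.restrictScalars k) = Module.finrank k (A ⧸ J) :=
  (Submodule.Quotient.restrictScalarsEquiv k J).finrank_eq

instance finite_quotient_restrictScalars (J : Ideal A) [Module.Finite k (A ⧸ J)] :
    Module.Finite k (A ⧸ J.restrictScalars k) :=
  Module.Finite.equiv (Submodule.Quotient.restrictScalarsEquiv k J).symm

lemma finite_quotient_of_le {J J' : Ideal A} (h : J ≤ J') [Module.Finite k (A ⧸ J)] :
    Module.Finite k (A ⧸ J') :=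
  Module.Finite.of_surjective (Ideal.Quotient.factorₐ k h).toLinearMap
    (Ideal.Quotient.factor_surjective h)

instance finite_quotient_sup (J J' : Ideal A) [Module.Finite k (A ⧸ J)] :
    Module.Finite k (A ⧸ (J ⊔ J')) :=
  finite_quotient_of_le le_sup_left

-- Multiplication by `c` filters `A / (J + c ^ n)` with `n` subquotients, each a quotient of
-- `A / (J + c)`.
lemma finrank_quotient_sup_pow_le (J : Ideal A) [Module.Finite k (A ⧸ J)] (c : A) (n : ℕ) :
    Module.finrank k (A ⧸ (J ⊔ Ideal.span {c ^ n})) ≤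
      n * Module.finrank k (A ⧸ (J ⊔ Ideal.span {c})) := by
  induction n with
  | zero =>
    have : Subsingleton (A ⧸ (J ⊔ Ideal.span {c ^ 0})) := by
      rw [Ideal.Quotient.subsingleton_iff]
      simp
    rw [Module.finrank_zero_of_subsingleton]
    exact Nat.zero_le _
  | succ n ih =>
    have hle : (J ⊔ Ideal.span {c}).restrictScalars k ≤
        ((J ⊔ Ideal.span {c ^ (n + 1)}).restrictScalars k).comap (LinearMap.mulLeft k (c ^ n)) := by
      intro x hx
      obtain ⟨y, hy, z, hz, rfl⟩ := Submodule.mem_sup.1 hx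
      obtain ⟨w, rfl⟩ := Ideal.mem_span_singleton'.1 hz
      exact Submodule.mem_sup.2 ⟨c ^ n * y, J.mul_mem_left _ hy, c ^ n * (w * c),
        Ideal.mem_span_singleton'.2 ⟨w, by ring⟩, by rw [LinearMap.mulLeft_apply, mul_add]⟩
    have hle' : (J ⊔ Ideal.span {c ^ n}).restrictScalars k ≤
        (J ⊔ Ideal.span {c ^ (n + 1)}).restrictScalars k ⊔ (LinearMap.mulLeft k (c ^ n)).range := by
      intro x hx
      obtain ⟨y, hy, z, hz, rfl⟩ := Submodule.mem_sup.1 hx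
      obtain ⟨w, rfl⟩ := Ideal.mem_span_singleton'.1 hz
      exact Submodule.add_mem_sup (Ideal.mem_sup_left hy) ⟨w, by simp [mul_comm]⟩
    have hstep := finrank_quotient_le_add (LinearMap.mulLeft k (c ^ n)) hle hle'
    simp only [finrank_quotient_restrictScalars] at hstep
    linarith

end Colength

section FrobeniusPower

open Polynomial

variable {A : Type*} [CommRing A]

lemma pow_mem_frobeniusPower {J : Ideal A} {x : A} (hx : x ∈ J) (q : ℕ) :
    x ^ q ∈ J.frobeniusPower q :=
  Ideal.subset_span ⟨x, hx, rfl⟩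

lemma frobeniusPower_pow_eq_map (p : ℕ) [ExpChar A p] (J : Ideal A) (n : ℕ) :
    J.frobeniusPower (p ^ n) = J.map (iterateFrobenius A p n) := rfl

lemma frobeniusPower_frobeniusPower (p : ℕ) [ExpChar A p] (J : Ideal A) (n : ℕ) :
    (J.frobeniusPower (p ^ n)).frobeniusPower p = J.frobeniusPower (p ^ (n + 1)) := by
  have hp : (J.frobeniusPower (p ^ n)).frobeniusPower p =
      (J.frobeniusPower (p ^ n)).map (frobenius A p) := rfl
  rw [hp, frobeniusPower_pow_eq_map, frobeniusPower_pow_eq_map, Ideal.map_map]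
  congr 1
  ext x
  simp [iterateFrobenius_def, frobenius_def, pow_succ, pow_mul]

instance finite_quotient_frobeniusPower {k : Type*} [Field k] [Algebra k A] [Algebra.FiniteType k A]
    (J : Ideal A) [Module.Finite k (A ⧸ J)] (q : ℕ) :
    Module.Finite k (A ⧸ J.frobeniusPower q) := by
  have : Algebra.IsIntegral k (A ⧸ J.frobeniusPower q) := by
    refine ⟨fun x => ?_⟩
    obtain ⟨a, rfl⟩ := Ideal.Quotient.mk_surjective x
    obtain ⟨P, hP, hPa⟩ := Algebra.IsIntegral.isIntegral (R := k) (Ideal.Quotient.mk J a)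
    refine ⟨P ^ q, hP.pow q, ?_⟩
    change aeval (Ideal.Quotient.mkₐ k J a) P = 0 at hPa
    change aeval (Ideal.Quotient.mkₐ k _ a) (P ^ q) = 0
    rw [aeval_algHom_apply] at hPa ⊢
    rw [map_pow]
    exact Ideal.Quotient.eq_zero_iff_mem.2
      (pow_mem_frobeniusPower (Ideal.Quotient.eq_zero_iff_mem.1 hPa) _)
  have : Algebra.FiniteType k (A ⧸ J.frobeniusPower q) :=
    .of_surjective (Ideal.Quotient.mkₐ k _) (Ideal.Quotient.mkₐ_surjective k _)
  exact Algebra.IsIntegral.finite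

variable (p : ℕ) [Fact p.Prime] {ι : Type*} [Fintype ι] [DecidableEq ι] [Algebra (ZMod p) A]
  [CharP A p]

lemma frobMap_mem_frobeniusPower (z : ι → A) {J : Ideal A} {a : (ι → Fin p) → A}
    (ha : ∀ α, a α ∈ J) : frobMap p z a ∈ J.frobeniusPower p :=
  Ideal.sum_mem _ fun α _ => Ideal.mul_mem_right _ _ (pow_mem_frobeniusPower (ha α) p)

lemma finrank_quotient_frobeniusPower_le (z : ι → A) {c : A}
    (hc : ∀ a, c ^ p * a ∈ (frobMap p z).range) (J : Ideal A)
    [Module.Finite (ZMod p) (A ⧸ J)] [Module.Finite (ZMod p) (A ⧸ J.frobeniusPower p)] :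
    Module.finrank (ZMod p) (A ⧸ J.frobeniusPower p) ≤
      p ^ Fintype.card ι * Module.finrank (ZMod p) (A ⧸ J) +
        p * Module.finrank (ZMod p) (A ⧸ (J.frobeniusPower p ⊔ Ideal.span {c})) := by
  have hJ : (Submodule.pi Set.univ fun _ : ι → Fin p => J.restrictScalars (ZMod p)) ≤
      ((J.frobeniusPower p).restrictScalars (ZMod p)).comap (frobMap p z) := fun a ha =>
    frobMap_mem_frobeniusPower p z fun α => ha α trivial
  have hrange : (J.frobeniusPower p ⊔ Ideal.span {c ^ p}).restrictScalars (ZMod p) ≤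
      (J.frobeniusPower p).restrictScalars (ZMod p) ⊔ (frobMap p z).range := by
    intro x hx
    obtain ⟨y, hy, w, hw, rfl⟩ := Submodule.mem_sup.1 hx
    obtain ⟨b, rfl⟩ := Ideal.mem_span_singleton.1 hw
    exact Submodule.add_mem_sup hy (hc b)
  have h := finrank_quotient_le_add (frobMap p z) hJ hrange
  rw [finrank_quotient_pi_const] at h
  simp only [finrank_quotient_restrictScalars, Fintype.card_fun, Fintype.card_fin] at h
  exact h.trans (Nat.add_le_add_left (finrank_quotient_sup_pow_le _ c p) _)

lemma exists_frobMap_eq_pow_mul {z : ι → A} {c : A} (hc : ∀ a, c ^ p * a ∈ (frobMap p z).range)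
    (hinj : Function.Injective (frobMap p z)) :
    ∃ ψ : A →ₗ[ZMod p] (ι → Fin p) → A, ∀ a, frobMap p z (ψ a) = c ^ p * a := by
  let e := LinearEquiv.ofInjective (frobMap p z) hinj
  let μ : A →ₗ[ZMod p] (frobMap p z).range :=
    (LinearMap.mulLeft (ZMod p) (c ^ p)).codRestrict _ hc
  exact ⟨e.symm.toLinearMap ∘ₗ μ, fun a => congrArg Subtype.val (e.apply_symm_apply (μ a))⟩

lemma mem_of_frobMap_eq_pow_mul {z : ι → A} {c : A} (hinj : Function.Injective (frobMap p z))
    {ψ : A →ₗ[ZMod p] (ι → Fin p) → A} (hψ : ∀ a, frobMap p z (ψ a) = c ^ p * a) {J : Ideal A}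
    {x : A} (hx : x ∈ J.frobeniusPower p) (α : ι → Fin p) : ψ x α ∈ J := by
  have hmul (r j : A) : ψ (r * j ^ p) = j • ψ r := hinj (by rw [hψ, frobMap_smul, hψ]; ring)
  suffices h : ∀ r α, ψ (r * x) α ∈ J by simpa using h 1 α
  induction hx using Submodule.span_induction with
  | mem x hx =>
    obtain ⟨j, hj, rfl⟩ := hx
    intro r α
    simpa only [hmul, Pi.smul_apply, smul_eq_mul] using J.mul_mem_right _ hj
  | zero => simp
  | add x y _ _ hx hy =>
    intro r α
    rw [mul_add, map_add]
    exact J.add_mem (hx r α) (hy r α)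
  | smul b x _ hx =>
    intro r α
    rw [smul_eq_mul, ← mul_assoc]
    exact hx (r * b) α

lemma pow_mul_finrank_quotient_le {z : ι → A} {c : A}
    (hc : ∀ a, c ^ p * a ∈ (frobMap p z).range) (hinj : Function.Injective (frobMap p z))
    (J : Ideal A) [Module.Finite (ZMod p) (A ⧸ J)]
    [Module.Finite (ZMod p) (A ⧸ J.frobeniusPower p)] :
    p ^ Fintype.card ι * Module.finrank (ZMod p) (A ⧸ J) ≤
      Module.finrank (ZMod p) (A ⧸ J.frobeniusPower p) +
        p ^ Fintype.card ι * Module.finrank (ZMod p) (A ⧸ (J ⊔ Ideal.span {c})) := by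
  obtain ⟨ψ, hψ⟩ := exists_frobMap_eq_pow_mul p hc hinj
  have hJ : (J.frobeniusPower p).restrictScalars (ZMod p) ≤
      (Submodule.pi Set.univ fun _ : ι → Fin p => J.restrictScalars (ZMod p)).comap ψ :=
    fun x hx α _ => mem_of_frobMap_eq_pow_mul p hinj hψ hx α
  have hrange :
      (Submodule.pi Set.univ fun _ : ι → Fin p => (J ⊔ Ideal.span {c}).restrictScalars (ZMod p)) ≤
        (Submodule.pi Set.univ fun _ : ι → Fin p => J.restrictScalars (ZMod p)) ⊔ ψ.range := by
    intro v hv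
    have hdecomp (α) : ∃ y ∈ J, ∃ w, y + c * w = v α := by
      obtain ⟨y, hy, w, hw, h⟩ := Submodule.mem_sup.1 (hv α trivial)
      obtain ⟨w, rfl⟩ := Ideal.mem_span_singleton.1 hw
      exact ⟨y, hy, w, h⟩
    choose y hy w hw using hdecomp
    have hv' : v = y + ψ (frobMap p z w) := by
      rw [hinj (a₁ := ψ (frobMap p z w)) (a₂ := c • w) (by rw [hψ, frobMap_smul])]
      exact funext fun α => (hw α).symm
    rw [hv']
    exact Submodule.add_mem_sup (fun α _ => hy α) ⟨_, rfl⟩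
  have h := finrank_quotient_le_add ψ hJ hrange
  rw [finrank_quotient_pi_const, finrank_quotient_pi_const] at h
  simpa only [finrank_quotient_restrictScalars, Fintype.card_fun, Fintype.card_fin] using h

lemma abs_finrank_quotient_frobeniusPower_sub_le {z : ι → A} {c : A}
    (hc : ∀ a, c ^ p * a ∈ (frobMap p z).range) (hinj : Function.Injective (frobMap p z))
    (J : Ideal A) [Module.Finite (ZMod p) (A ⧸ J)]
    [Module.Finite (ZMod p) (A ⧸ J.frobeniusPower p)] :
    |(Module.finrank (ZMod p) (A ⧸ J.frobeniusPower p) : ℝ) -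
        (p : ℝ) ^ Fintype.card ι * Module.finrank (ZMod p) (A ⧸ J)| ≤
      p * Module.finrank (ZMod p) (A ⧸ (J.frobeniusPower p ⊔ Ideal.span {c})) +
        (p : ℝ) ^ Fintype.card ι * Module.finrank (ZMod p) (A ⧸ (J ⊔ Ideal.span {c})) := by
  have hupper := finrank_quotient_frobeniusPower_le p z hc J
  have hlower := pow_mul_finrank_quotient_le p hc hinj J
  rify at hupper hlower
  refine abs_sub_le_iff.2 ⟨?_, ?_⟩
  · exact (sub_le_iff_le_add'.2 hupper).trans (le_add_of_nonneg_right (by positivity))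
  · exact (sub_le_iff_le_add'.2 hlower).trans (le_add_of_nonneg_left (by positivity))

end FrobeniusPower

section PolySpans

open Polynomial

variable {k B ι κ : Type*} [CommRing k] [CommRing B] [Algebra k B] [Fintype κ]

/-- The family `m` spans `B` as a module over its subalgebra `k[y]`. -/
def PolySpans (k : Type*) {B ι κ : Type*} [CommRing k] [CommRing B] [Algebra k B] [Fintype κ]
    (y : ι → B) (m : κ → B) : Prop :=
  ∀ b, ∃ t : κ → MvPolynomial ι k, ∑ j, MvPolynomial.aeval y (t j) * m j = b

lemma PolySpans.comp {B' : Type*} [CommRing B'] [Algebra k B'] {y : ι → B} {m : κ → B}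
    (h : PolySpans k y m) {f : B →ₐ[k] B'} (hf : Function.Surjective f) :
    PolySpans k (f ∘ y) (f ∘ m) := by
  intro b
  obtain ⟨b, rfl⟩ := hf b
  obtain ⟨t, rfl⟩ := h b
  exact ⟨t, by simp [MvPolynomial.comp_aeval_apply, Function.comp_def]⟩

lemma PolySpans.finite {y : ι → B} {m : κ → B} (h : PolySpans k y m) :
    (MvPolynomial.aeval y : _ →ₐ[k] B).toRingHom.Finite := by
  let := (MvPolynomial.aeval y : _ →ₐ[k] B).toRingHom.toAlgebra
  have hspan : Submodule.span (MvPolynomial ι k) (Set.range m) = ⊤ := by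
    refine Submodule.eq_top_iff'.2 fun b => ?_
    obtain ⟨t, rfl⟩ := h b
    exact Submodule.sum_mem _ fun j _ =>
      Submodule.smul_mem _ (t j) (Submodule.subset_span (Set.mem_range_self j))
  exact ⟨Submodule.fg_def.2 ⟨_, Set.finite_range m, hspan⟩⟩

lemma PolySpans.adjoin_eq_top {y : ι → B} {m : κ → B} (h : PolySpans k y m) :
    Algebra.adjoin k (Set.range (Sum.elim y m)) = ⊤ := by
  refine Algebra.eq_top_iff.2 fun b => ?_
  obtain ⟨t, rfl⟩ := h b
  refine Subalgebra.sum_mem _ fun j _ => Subalgebra.mul_mem _ ?_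
    (Algebra.subset_adjoin ⟨Sum.inr j, rfl⟩)
  refine Algebra.adjoin_mono ?_
    (Algebra.adjoin_range_eq_range_aeval k y ▸ AlgHom.mem_range_self _ _)
  rintro _ ⟨i, rfl⟩
  exact ⟨Sum.inl i, rfl⟩

variable [Fintype ι]

lemma aeval_mem_span_range_prod_pow {y : ι → B} {g : ι → k[X]} (hg : ∀ i, (g i).Monic)
    (hy : ∀ i, aeval (y i) (g i) = 0) (F : MvPolynomial ι k) :
    MvPolynomial.aeval y F ∈
      Submodule.span k (Set.range fun f : ∀ i, Fin (g i).natDegree => ∏ i, y i ^ (f i : ℕ)) := by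
  classical
  rw [MvPolynomial.aeval_def, MvPolynomial.eval₂_eq']
  refine Submodule.sum_mem _ fun e _ => ?_
  rw [← Algebra.smul_def]
  refine Submodule.smul_mem _ _ ?_
  rw [Finset.prod_congr rfl fun i _ => pow_eq_sum_coeff_modByMonic (hg i) (hy i) (e i),
    Finset.prod_univ_sum]
  simp only [Finset.prod_smul]
  exact Submodule.sum_mem _ fun f _ =>
    Submodule.smul_mem _ _ (Submodule.subset_span (Set.mem_range_self f))

lemma PolySpans.finrank_le [StrongRankCondition k] {y : ι → B} {m : κ → B} (h : PolySpans k y m)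
    {g : ι → k[X]} (hg : ∀ i, (g i).Monic) (hy : ∀ i, aeval (y i) (g i) = 0) :
    Module.finrank k B ≤ Fintype.card κ * ∏ i, (g i).natDegree := by
  classical
  let b : κ × (∀ i, Fin (g i).natDegree) → B := fun x => (∏ i, y i ^ (x.2 i : ℕ)) * m x.1
  have hb : Submodule.span k (Set.range b) = ⊤ := by
    refine Submodule.eq_top_iff'.2 fun a => ?_
    obtain ⟨t, rfl⟩ := h a
    refine Submodule.sum_mem _ fun j _ => ?_
    have hmem := Submodule.mem_map_of_mem (f := LinearMap.mulRight k (m j))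
      (aeval_mem_span_range_prod_pow hg hy (t j))
    rw [Submodule.map_span, ← Set.range_comp] at hmem
    refine Submodule.span_mono ?_ hmem
    rintro _ ⟨f, rfl⟩
    exact ⟨(j, f), rfl⟩
  rw [← finrank_top, ← hb]
  exact (finrank_range_le_card (R := k) b).trans_eq (by simp)

-- The `q`-th power of the minimal polynomial of `y i` modulo `J` vanishes at `y i` modulo
-- `J.frobeniusPower q`, so only exponents of `y i` below `q * finrank k (A ⧸ J)` are needed.
lemma PolySpans.finrank_quotient_frobeniusPower_sup_le {k A : Type*} [Field k] [CommRing A]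
    [Algebra k A] {𝔠 : Ideal A} {y : ι → A ⧸ 𝔠} {m : κ → A ⧸ 𝔠} (h : PolySpans k y m)
    (J : Ideal A) [Module.Finite k (A ⧸ J)] (q : ℕ) :
    Module.finrank k (A ⧸ (J.frobeniusPower q ⊔ 𝔠)) ≤
      Fintype.card κ * (q * Module.finrank k (A ⧸ J)) ^ Fintype.card ι := by
  obtain ⟨y, rfl⟩ := Ideal.Quotient.mk_surjective.comp_left y
  let P (i : ι) : k[X] := minpoly k (Ideal.Quotient.mkₐ k J (y i))
  have hP (i) : (P i ^ q).Monic := (minpoly.monic (Algebra.IsIntegral.isIntegral _)).pow q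
  have hroot (i) : aeval (Ideal.Quotient.mkₐ k (J.frobeniusPower q ⊔ 𝔠) (y i)) (P i ^ q) = 0 := by
    rw [aeval_algHom_apply, map_pow]
    refine Ideal.Quotient.eq_zero_iff_mem.2 (Ideal.mem_sup_left (pow_mem_frobeniusPower ?_ q))
    rw [← Ideal.Quotient.eq_zero_iff_mem, ← Ideal.Quotient.mkₐ_eq_mk k, ← aeval_algHom_apply]
    exact minpoly.aeval _ _
  have hdeg (i) : (P i ^ q).natDegree ≤ q * Module.finrank k (A ⧸ J) :=
    natDegree_pow_le.trans (Nat.mul_le_mul_left q (minpoly.natDegree_le _))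
  have hspan := h.comp (f := Ideal.Quotient.factorₐ k (le_sup_right (a := J.frobeniusPower q)))
    (Ideal.Quotient.factor_surjective le_sup_right)
  exact (hspan.finrank_le hP hroot).trans
    (Nat.mul_le_mul_left _ (Finset.prod_le_pow_card _ _ _ fun i _ => hdeg i))

end PolySpans

section NoetherNormalization

open nonZeroDivisors Pointwise TensorProduct

variable {D K B Q : Type*} [CommRing D] [IsDomain D] [Field K] [Algebra D K] [IsFractionRing D K]
  [CommRing B] [Algebra D B] [CommRing Q] [Algebra B Q] [Algebra D Q] [Algebra K Q]
  [IsScalarTower D B Q] [IsScalarTower D K Q]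

lemma exists_smul_isIntegral_of_isIntegral_algebraMap {S S' : Type*} [CommRing S] [CommRing S']
    [Algebra S S'] [Algebra S B] [Algebra S Q] [Algebra S' Q] [IsScalarTower S B Q]
    [IsScalarTower S S' Q] (M : Submonoid S) [IsLocalization M S']
    [IsLocalization (Algebra.algebraMapSubmonoid B M) Q] {b : B}
    (hb : IsIntegral S' (algebraMap B Q b)) : ∃ m ∈ M, IsIntegral S (m • b) := by
  obtain ⟨⟨m₁, hm₁⟩, h₁⟩ := IsIntegral.exists_multiple_integral_of_isLocalization M _ hb
  have h₂ : IsIntegral S (algebraMap B Q (m₁ • b)) := by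
    rw [Algebra.smul_def, map_mul, ← IsScalarTower.algebraMap_apply, ← Algebra.smul_def]
    exact h₁
  obtain ⟨m₂, hm₂, h₃⟩ := IsLocalization.exists_isIntegral_smul_of_isIntegral_map M h₂
  exact ⟨m₂ * m₁, mul_mem hm₂ hm₁, by rwa [mul_smul]⟩

lemma exists_algebraicIndependent_comp_algebraMap
    [IsLocalization (Algebra.algebraMapSubmonoid B D⁰) Q] [Algebra.FiniteType K Q] [Nontrivial Q] :
    ∃ (s : ℕ) (z : Fin s → B), AlgebraicIndependent K (algebraMap B Q ∘ z) ∧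
      (MvPolynomial.aeval (algebraMap B Q ∘ z) : _ →ₐ[K] Q).toRingHom.IsIntegral := by
  obtain ⟨s, g, hginj, hgint⟩ := exists_integral_inj_algHom_of_fg K Q
  obtain ⟨⟨_, n, hn, rfl⟩, hb⟩ := IsLocalization.exist_integer_multiples_of_finite
    (Algebra.algebraMapSubmonoid B D⁰) (fun i => g (MvPolynomial.X i))
  choose z hz using hb
  obtain ⟨r, hr, hzr⟩ : ∃ r : K, r ≠ 0 ∧ ∀ i, algebraMap B Q (z i) = r • g (MvPolynomial.X i) :=
    ⟨algebraMap D K n, by simpa using nonZeroDivisors.ne_zero hn, fun i => by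
      rw [hz i, algebraMap_smul, algebraMap_smul]⟩
  let σ : MvPolynomial (Fin s) K ≃ₐ[K] MvPolynomial (Fin s) K := AlgEquiv.ofAlgHom
    (MvPolynomial.aeval fun i => r • MvPolynomial.X i)
    (MvPolynomial.aeval fun i => r⁻¹ • MvPolynomial.X i)
    (by ext i; simp [smul_smul, hr]) (by ext i; simp [smul_smul, hr])
  have hσ : (MvPolynomial.aeval (algebraMap B Q ∘ z) : _ →ₐ[K] Q) = g.comp σ.toAlgHom := by
    ext i
    simp [σ, hzr i]
  refine ⟨s, z, ?_, ?_⟩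
  · rw [AlgebraicIndependent, hσ]
    exact hginj.comp σ.injective
  · rw [hσ]
    exact (RingHom.isIntegral_of_surjective σ.toAlgHom.toRingHom σ.surjective).trans _ _ hgint

lemma exists_smul_isIntegralElem_aeval
    [IsLocalization (Algebra.algebraMapSubmonoid B D⁰) Q] {ι : Type*} {z : ι → B}
    (hz : (MvPolynomial.aeval (algebraMap B Q ∘ z) : _ →ₐ[K] Q).toRingHom.IsIntegral) (b : B) :
    ∃ n : D, n ≠ 0 ∧ (MvPolynomial.aeval z : _ →ₐ[D] B).toRingHom.IsIntegralElem (n • b) := by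
  let S := MvPolynomial ι D
  let S' := MvPolynomial ι K
  let : Algebra S S' := MvPolynomial.algebraMvPolynomial
  let : Algebra S B := (MvPolynomial.aeval z : _ →ₐ[D] B).toRingHom.toAlgebra
  let : Algebra S' Q := (MvPolynomial.aeval (algebraMap B Q ∘ z) : _ →ₐ[K] Q).toRingHom.toAlgebra
  let : Algebra S Q := ((algebraMap B Q).comp (algebraMap S B)).toAlgebra
  have : IsScalarTower D S B := .of_algebraMap_eq fun r => ((MvPolynomial.aeval z).commutes r).symm
  have : IsScalarTower S B Q := .of_algebraMap_eq' rfl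
  have : IsScalarTower S S' Q := .of_algebraMap_eq' <| by
    refine MvPolynomial.ringHom_ext (fun r => ?_) fun i => ?_
    · simp [S, S', RingHom.algebraMap_toAlgebra, ← IsScalarTower.algebraMap_apply]
    · simp [S, S', RingHom.algebraMap_toAlgebra]
  have : IsLocalization (Algebra.algebraMapSubmonoid B (D⁰.map (MvPolynomial.C : D →+* S))) Q := by
    convert ‹IsLocalization (Algebra.algebraMapSubmonoid B D⁰) Q›
    ext b
    simp [Algebra.algebraMapSubmonoid, RingHom.algebraMap_toAlgebra]
  obtain ⟨_, ⟨n, hn, rfl⟩, h⟩ := exists_smul_isIntegral_of_isIntegral_algebraMap (S' := S')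
    (D⁰.map (MvPolynomial.C : D →+* S)) (hz (algebraMap B Q b))
  refine ⟨n, nonZeroDivisors.ne_zero hn, ?_⟩
  rwa [← algebraMap_smul S n b]

lemma exists_smul_isIntegralElem_of_finite (D : Type*) {B σ : Type*} [CommRing D] [IsDomain D]
    [CommRing B] [Algebra D B] [Algebra.FiniteType D B] [Finite σ] (w : σ → B) :
    ∃ (s : ℕ) (z : Fin s → B) (N : D), N ≠ 0 ∧ (s = 0 ∨ AlgebraicIndependent D z) ∧
      ∀ i, (MvPolynomial.aeval z : _ →ₐ[D] B).toRingHom.IsIntegralElem (N • w i) := by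
  classical
  have := Fintype.ofFinite σ
  let K := FractionRing D
  let Q := K ⊗[D] B
  let : Algebra B Q := Algebra.TensorProduct.rightAlgebra
  have : IsLocalization (Algebra.algebraMapSubmonoid B D⁰) Q := IsLocalization.tensorRight K D⁰
  rcases subsingleton_or_nontrivial Q with hQ | hQ
  · obtain ⟨⟨_, N, hN, rfl⟩, h⟩ := (IsLocalization.map_eq_zero_iff
      (Algebra.algebraMapSubmonoid B D⁰) Q 1).1 (Subsingleton.elim _ _)
    refine ⟨0, Fin.elim0, N, nonZeroDivisors.ne_zero hN, Or.inl rfl, fun i => ?_⟩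
    have hNw : N • w i = 0 := by
      rw [Algebra.smul_def, ← mul_one (algebraMap D B N), h, zero_mul]
    rw [hNw]
    exact RingHom.isIntegralElem_zero _
  · obtain ⟨s, z, hz, hint⟩ := exists_algebraicIndependent_comp_algebraMap (D := D) (K := K)
      (B := B) (Q := Q)
    choose n hn0 hn using fun i => exists_smul_isIntegralElem_aeval (D := D) hint (w i)
    refine ⟨s, z, ∏ i, n i, Finset.prod_ne_zero_iff.2 fun i _ => hn0 i, Or.inr ?_, fun i => ?_⟩
    · exact (hz.restrictScalars (IsFractionRing.injective D K)).of_comp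
        (IsScalarTower.toAlgHom D B Q)
    · rw [← Finset.prod_erase_mul _ _ (Finset.mem_univ i), mul_smul,
        Algebra.smul_def, ← (MvPolynomial.aeval z : _ →ₐ[D] B).commutes]
      exact (RingHom.isIntegralElem_map _).mul _ (hn i)

/-- Noether normalization of a `D`-algebra away from `N`: up to powers of `N`, every element is a
combination of the finitely many elements `m`, integral over `D[z]`, with coefficients in `D[z]`.
-/
structure PolySpansAway (N : D) {ι κ : Type*} [Fintype κ] (z : ι → B) (m : κ → B) : Prop where
  isIntegralElem (j : κ) : (MvPolynomial.aeval z : _ →ₐ[D] B).toRingHom.IsIntegralElem (m j)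
  exists_pow_smul_eq_sum (b : B) : ∃ (k : ℕ) (t : κ → MvPolynomial ι D),
    N ^ k • b = ∑ j, MvPolynomial.aeval z (t j) * m j

lemma exists_polySpansAway (D B : Type*) [CommRing D] [IsDomain D] [CommRing B] [Algebra D B]
    [Algebra.FiniteType D B] : ∃ (s u : ℕ) (z : Fin s → B) (m : Fin u → B) (N : D), N ≠ 0 ∧
      (s = 0 ∨ AlgebraicIndependent D z) ∧ PolySpansAway N z m := by
  obtain ⟨w, hw⟩ := Algebra.FiniteType.out (R := D) (A := B)
  obtain ⟨s, z, N, hN, hz, hint⟩ := exists_smul_isIntegralElem_of_finite D ((↑) : w → B)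
  let : Algebra (MvPolynomial (Fin s) D) B := (MvPolynomial.aeval z : _ →ₐ[D] B).toRingHom.toAlgebra
  have : IsScalarTower D (MvPolynomial (Fin s) D) B :=
    .of_algebraMap_eq fun r => ((MvPolynomial.aeval z : _ →ₐ[D] B).commutes r).symm
  have hwint : ∀ x ∈ N • (w : Set B), IsIntegral (MvPolynomial (Fin s) D) x := by
    rintro _ ⟨x, hx, rfl⟩
    exact hint ⟨x, hx⟩
  let T := Algebra.adjoin (MvPolynomial (Fin s) D) (N • (w : Set B))
  have hTint : ∀ x ∈ T, IsIntegral (MvPolynomial (Fin s) D) x :=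
    fun x hx => Algebra.IsIntegral.adjoin hwint |>.1 ⟨x, hx⟩ |>.map T.val
  obtain ⟨u, m, hm⟩ := Submodule.fg_iff_exists_fin_generating_family.1
    (fg_adjoin_of_finite (w.finite_toSet.smul_set) hwint)
  refine ⟨s, u, z, m, N, hN, hz, fun j => hTint _ ?_, fun b => ?_⟩
  · exact hm.le (Submodule.subset_span (Set.mem_range_self j))
  · obtain ⟨k, hk⟩ :=
      Algebra.pow_smul_mem_adjoin_smul N (w : Set B) (hw.ge (Algebra.mem_top (x := b)))
    have hle : Algebra.adjoin D (N • (w : Set B)) ≤ T.restrictScalars D :=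
      Algebra.adjoin_le Algebra.subset_adjoin
    have hmem : N ^ k • b ∈ Subalgebra.toSubmodule T := hle (hk k le_rfl)
    rw [← hm] at hmem
    obtain ⟨t, ht⟩ := (Submodule.mem_span_range_iff_exists_fun _).1 hmem
    exact ⟨k, t, ht.symm⟩

end NoetherNormalization

section Reduction

open Polynomial

lemma ringKrullDim_eq_of_isIntegral (S B : Type*) [CommRing S] [CommRing B] [Algebra S B]
    [Algebra.IsIntegral S B] [FaithfulSMul S B] : ringKrullDim B = ringKrullDim S := by
  apply le_antisymm
  · refine Order.krullDim_le_of_strictMono (PrimeSpectrum.comap (algebraMap S B)) ?_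
    intro P Q hPQ
    exact Ideal.IsIntegral.comap_lt_comap (R := S) (I := P.asIdeal) (J := Q.asIdeal) hPQ
  · refine iSup_le fun l => ?_
    obtain ⟨P, -, hP, hPl⟩ := Ideal.exists_ideal_over_prime_of_isIntegral
      (S := B) (RelSeries.head l).asIdeal ⊥ (by
        rw [← RingHom.ker_eq_comap_bot,
          (RingHom.injective_iff_ker_eq_bot _).1 (FaithfulSMul.algebraMap_injective S B)]
        exact bot_le)
    have : P.LiesOver (RelSeries.head l).asIdeal := ⟨hPl.symm⟩
    obtain ⟨L, hL, -, -⟩ := Ideal.exists_ltSeries_of_hasGoingUp l P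
    rw [← hL]
    exact Order.LTSeries.length_le_krullDim L

variable {D B k A ι κ : Type*} [CommRing D] [CommRing B] [Algebra D B] [Fintype κ]
  {N : D} {z : ι → B} {m : κ → B}

lemma PolySpansAway.exists_isIntegralElem_pow_smul (h : PolySpansAway N z m) (b : B) :
    ∃ e : ℕ, (MvPolynomial.aeval z : _ →ₐ[D] B).toRingHom.IsIntegralElem (N ^ e • b) := by
  obtain ⟨e, t, ht⟩ := h.exists_pow_smul_eq_sum b
  refine ⟨e, ?_⟩
  rw [ht]
  let := (MvPolynomial.aeval z : _ →ₐ[D] B).toRingHom.toAlgebra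
  exact IsIntegral.sum _ fun j _ => (RingHom.isIntegralElem_map _).mul _ (h.isIntegralElem j)

lemma PolySpansAway.C_dvd_of_smul_eq_aeval [IsDomain D] (h : PolySpansAway N z m)
    (hz : AlgebraicIndependent D z) {π : D} (hπ : Prime π) (hπN : ¬ π ∣ N) {F : MvPolynomial ι D}
    {b : B} (hb : π • b = MvPolynomial.aeval z F) : MvPolynomial.C π ∣ F := by
  obtain ⟨e, G, hG, hGb⟩ := h.exists_isIntegralElem_pow_smul b
  have hdvd : MvPolynomial.C π ∣ (MvPolynomial.C (N ^ e) * F) ^ G.natDegree := by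
    refine dvd_pow_natDegree_of_eval₂_eq_zero
      (f := (MvPolynomial.aeval z : _ →ₐ[D] B).toRingHom) hz hG _ _ _ hGb ?_
    simp [← hb, Algebra.smul_def, mul_left_comm]
  have hprime : Prime (MvPolynomial.C π : MvPolynomial ι D) := (MvPolynomial.prime_C_iff _).2 hπ
  refine (hprime.dvd_or_dvd (hprime.dvd_of_dvd_pow hdvd)).resolve_left fun hN => hπN ?_
  rw [MvPolynomial.C_dvd_iff_dvd_coeff] at hN
  exact hπ.dvd_of_dvd_pow (by simpa only [MvPolynomial.coeff_zero_C] using hN 0)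

variable [CommRing A] [Algebra D A]

lemma eval₂_aeval_map_algebraMap [CommRing k] [Algebra D k] [Algebra k A] [IsScalarTower D k A]
    (φ : B →ₐ[D] A) (z : ι → B) (x : B) (G : (MvPolynomial ι D)[X]) :
    (G.map (MvPolynomial.map (algebraMap D k))).eval₂
        (MvPolynomial.aeval (φ ∘ z) : _ →ₐ[k] A).toRingHom (φ x) =
      φ (G.eval₂ (MvPolynomial.aeval z : _ →ₐ[D] B).toRingHom x) := by
  have hcomp : (MvPolynomial.aeval (φ ∘ z) : _ →ₐ[k] A).toRingHom.comp
      (MvPolynomial.map (algebraMap D k)) =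
        φ.toRingHom.comp (MvPolynomial.aeval z : _ →ₐ[D] B).toRingHom := by
    ext <;> simp [← IsScalarTower.algebraMap_apply]
  rw [eval₂_map, hcomp]
  exact (hom_eval₂ _ _ φ.toRingHom _).symm

variable [Field k] [Algebra D k] [Algebra k A] [IsScalarTower D k A]

lemma PolySpansAway.polySpans_comp (h : PolySpansAway N z m) {φ : B →ₐ[D] A}
    (hφ : Function.Surjective φ) (hN : algebraMap D k N ≠ 0) :
    PolySpans k (φ ∘ z) (φ ∘ m) := by
  intro a
  obtain ⟨b, rfl⟩ := hφ a
  obtain ⟨e, t, ht⟩ := h.exists_pow_smul_eq_sum b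
  refine ⟨fun j => (algebraMap D k N ^ e)⁻¹ • MvPolynomial.map (algebraMap D k) (t j), ?_⟩
  have hsum : ∑ j, MvPolynomial.aeval (φ ∘ z) (t j) * φ (m j) = algebraMap D k N ^ e • φ b := by
    rw [← map_pow, algebraMap_smul, ← map_smul, ht, map_sum]
    simp [MvPolynomial.comp_aeval_apply, Function.comp_def]
  simp_rw [map_smul, smul_mul_assoc, MvPolynomial.aeval_map_algebraMap, Function.comp_apply]
  rw [← Finset.smul_sum, hsum, inv_smul_smul₀ (pow_ne_zero e hN)]

variable [IsDomain D] {π : D}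

-- A relation modulo `π` lifts to a polynomial in `z` divisible by `π` in `B`; the quotient is
-- integral up to a power of `N`, and `π` is prime in the polynomial ring.
lemma PolySpansAway.algebraicIndependent_comp (h : PolySpansAway N z m)
    (hz : AlgebraicIndependent D z) (hπ : Prime π) (hk : Function.Surjective (algebraMap D k))
    (hπk : algebraMap D k π = 0) (hN : algebraMap D k N ≠ 0) {φ : B →ₐ[D] A}
    (hφ : ∀ b, φ b = 0 → ∃ b', π • b' = b) : AlgebraicIndependent k (φ ∘ z) := by
  rw [algebraicIndependent_iff]
  intro F hF
  obtain ⟨F, rfl⟩ := MvPolynomial.map_surjective _ hk F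
  rw [MvPolynomial.aeval_map_algebraMap] at hF
  obtain ⟨b, hb⟩ := hφ (MvPolynomial.aeval z F)
    (by rw [MvPolynomial.comp_aeval_apply]; exact hF)
  have hπN : ¬ π ∣ N := by
    rintro ⟨r, rfl⟩
    exact hN (by rw [map_mul, hπk, zero_mul])
  obtain ⟨F, rfl⟩ := h.C_dvd_of_smul_eq_aeval hz hπ hπN hb
  simp [hπk]

lemma PolySpansAway.ringKrullDim_eq [Fintype ι] (h : PolySpansAway N z m)
    (hz : AlgebraicIndependent D z) (hπ : Prime π) (hk : Function.Surjective (algebraMap D k))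
    (hπk : algebraMap D k π = 0) (hN : algebraMap D k N ≠ 0) {φ : B →ₐ[D] A}
    (hφs : Function.Surjective φ) (hφ : ∀ b, φ b = 0 → ∃ b', π • b' = b) :
    ringKrullDim A = Fintype.card ι := by
  let : Algebra (MvPolynomial ι k) A := (MvPolynomial.aeval (φ ∘ z) : _ →ₐ[k] A).toRingHom.toAlgebra
  have : FaithfulSMul (MvPolynomial ι k) A := (faithfulSMul_iff_algebraMap_injective _ _).2
    (h.algebraicIndependent_comp hz hπ hk hπk hN hφ)
  have : Module.Finite (MvPolynomial ι k) A := (h.polySpans_comp hφs hN).finite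
  rw [ringKrullDim_eq_of_isIntegral (MvPolynomial ι k) A,
    MvPolynomial.ringKrullDim_of_isNoetherianRing, ringKrullDim_eq_zero_of_field]
  simp

end Reduction

section DiscriminantNeZero

open Polynomial

lemma discr_ne_zero_of_separable {K : Type*} [Field K] {f : K[X]} (hf : f.Monic)
    (hsep : f.Separable) : f.discr ≠ 0 := by
  rcases f.natDegree.eq_zero_or_pos with h0 | hpos
  · rw [hf.natDegree_eq_zero.1 h0, ← C_1, discr_C]
    exact one_ne_zero
  intro h
  have hres := resultant_deriv (natDegree_pos_iff_degree_pos.1 hpos)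
  rw [h, mul_zero, ← Nat.add_sub_cancel' (natDegree_derivative_le f),
    resultant_add_right_deg _ _ _ _ _ le_rfl, coeff_natDegree, hf.leadingCoeff, one_pow,
    one_mul] at hres
  exact resultant_ne_zero f (derivative f) hsep hres

lemma discr_minpoly_ne_zero {S B : Type*} [CommRing S] [IsDomain S] [IsIntegrallyClosed S]
    [CharZero S] [CommRing B] [IsDomain B] [Algebra S B] [FaithfulSMul S B] {x : B}
    (hx : IsIntegral S x) : (minpoly S x).discr ≠ 0 := by
  let K := FractionRing S
  let L := FractionRing B
  let : Algebra K L := FractionRing.liftAlgebra _ _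
  have hxL : IsIntegral K (algebraMap B L x) := hx.algebraMap.tower_top
  intro h
  refine discr_ne_zero_of_separable (minpoly.monic hxL) (minpoly.irreducible hxL).separable ?_
  rw [minpoly.isIntegrallyClosed_eq_field_fractions K L hx,
    discr_map_of_monic (minpoly.monic hx), h, map_zero]

lemma exists_monic_eval₂_aeval_eq_zero_discr_ne_zero {D B ι : Type*} [CommRing D] [IsDomain D]
    [UniqueFactorizationMonoid D] [CharZero D] [CommRing B] [IsDomain B] [Algebra D B] {z : ι → B}
    (hz : AlgebraicIndependent D z) {x : B}
    (hx : (MvPolynomial.aeval z : _ →ₐ[D] B).toRingHom.IsIntegralElem x) :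
    ∃ g : (MvPolynomial ι D)[X], g.Monic ∧
      g.eval₂ (MvPolynomial.aeval z : _ →ₐ[D] B).toRingHom x = 0 ∧ g.discr ≠ 0 := by
  let := (MvPolynomial.aeval z : _ →ₐ[D] B).toRingHom.toAlgebra
  have : FaithfulSMul (MvPolynomial ι D) B := (faithfulSMul_iff_algebraMap_injective _ _).2 hz
  have hint : IsIntegral (MvPolynomial ι D) x := hx
  exact ⟨minpoly _ x, minpoly.monic hint, minpoly.aeval _ x, discr_minpoly_ne_zero hint⟩

end DiscriminantNeZero

section ReductionDiscriminant

open Polynomial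

variable {D B ι κ : Type*} [CommRing D] [CommRing B] [Algebra D B] [Fintype κ] {N : D} {z : ι → B}
  {m : κ → B}

lemma PolySpansAway.isIntegralElem_sumElim (h : PolySpansAway N z m) (i : ι ⊕ κ) :
    (MvPolynomial.aeval z : _ →ₐ[D] B).toRingHom.IsIntegralElem (Sum.elim z m i) := by
  rcases i with i | j
  · simpa using (MvPolynomial.aeval z : _ →ₐ[D] B).toRingHom.isIntegralElem_map
      (x := MvPolynomial.X i)
  · exact h.isIntegralElem j

lemma PolySpansAway.map_prod_discr_pow_mul_mem_range_frobMap [Fintype ι] [DecidableEq ι]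
    {p : ℕ} [Fact p.Prime] [Algebra D (ZMod p)] {A : Type*} [CommRing A] [Algebra (ZMod p) A]
    [Algebra D A] [IsScalarTower D (ZMod p) A] [CharP A p] (h : PolySpansAway N z m) {φ : B →ₐ[D] A}
    (hφ : Function.Surjective φ) (hN : algebraMap D (ZMod p) N ≠ 0)
    {g : ι ⊕ κ → (MvPolynomial ι D)[X]} (hg : ∀ i, (g i).Monic)
    (hroot : ∀ i, (g i).eval₂ (MvPolynomial.aeval z : _ →ₐ[D] B).toRingHom (Sum.elim z m i) = 0)
    (a : A) :
    φ (MvPolynomial.aeval z (∏ i, (g i).discr)) ^ p * a ∈ (frobMap p (φ ∘ z)).range := by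
  let ρ := MvPolynomial.map (σ := ι) (algebraMap D (ZMod p))
  have hdiscr : ∏ i, ((g i).map ρ).discr = ρ (∏ i, (g i).discr) := by
    rw [map_prod]
    exact Finset.prod_congr rfl fun i _ => discr_map_of_monic (hg i) ρ
  have hmem := prod_discr_pow_mul_mem_range_frobMap p (φ ∘ z) (v := φ ∘ Sum.elim z m)
    (g := fun i => (g i).map ρ) (Sum.comp_elim φ z m ▸ (h.polySpans_comp hφ hN).adjoin_eq_top)
    (fun i => (hg i).map ρ)
    (fun i => by
      rw [Function.comp_apply, eval₂_aeval_map_algebraMap φ, hroot, map_zero]) a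
  rw [MvPolynomial.comp_aeval_apply]
  rwa [hdiscr, MvPolynomial.aeval_map_algebraMap] at hmem

end ReductionDiscriminant

section Fibers

lemma algebraMap_int_zmod_ne_zero {N : ℤ} (hN : N ≠ 0) {p : ℕ} (hp : N.natAbs < p) :
    algebraMap ℤ (ZMod p) N ≠ 0 := by
  rw [eq_intCast, Ne, ZMod.intCast_zmod_eq_zero_iff_dvd]
  exact fun h => hp.not_ge (Nat.le_of_dvd (Int.natAbs_pos.2 hN) (Int.natCast_dvd.1 h))

lemma exists_forall_map_intCast_ne_zero {ι : Type*} {F : MvPolynomial ι ℤ} (hF : F ≠ 0) :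
    ∃ M : ℕ, ∀ p, M < p → MvPolynomial.map (algebraMap ℤ (ZMod p)) F ≠ 0 := by
  obtain ⟨a, ha⟩ := MvPolynomial.ne_zero_iff.1 hF
  refine ⟨(F.coeff a).natAbs, fun p hp h => algebraMap_int_zmod_ne_zero ha hp ?_⟩
  rw [← MvPolynomial.coeff_map, h, MvPolynomial.coeff_zero]

lemma exists_smul_eq_of_quotientMapₐ_eq_zero {D B A : Type*} [CommRing D] [CommRing B] [CommRing A]
    [Algebra D B] [Algebra D A] {φ : B →ₐ[D] A} (hφs : Function.Surjective φ) {π : D}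
    (hφ : ∀ b, φ b = 0 → ∃ b', π • b' = b) (𝔠 : Ideal B) (b : B ⧸ 𝔠)
    (hb : Ideal.quotientMapₐ (𝔠.map φ) φ Ideal.le_comap_map b = 0) : ∃ b', π • b' = b := by
  obtain ⟨r, rfl⟩ := Ideal.Quotient.mk_surjective b
  obtain ⟨x, hx, hxr⟩ := (Ideal.mem_map_iff_of_surjective φ hφs).1
    (Ideal.Quotient.eq_zero_iff_mem.1 hb)
  obtain ⟨t, ht⟩ := hφ (r - x) (by rw [map_sub, sub_eq_zero]; exact hxr.symm)
  refine ⟨Ideal.Quotient.mk 𝔠 t, ?_⟩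
  rw [← Ideal.Quotient.mkₐ_eq_mk D, ← map_smul, ht, map_sub, Ideal.Quotient.mkₐ_eq_mk,
    Ideal.Quotient.eq_zero_iff_mem.2 hx, sub_zero]

variable {R : Type*} [CommRing R]

lemma exists_smul_eq_of_mk_eq_zero (p : ℕ) (b : R)
    (hb : Ideal.Quotient.mkₐ ℤ (Ideal.span {(p : R)}) b = 0) : ∃ b', (p : ℤ) • b' = b := by
  obtain ⟨t, rfl⟩ := Ideal.mem_span_singleton.1 (Ideal.Quotient.eq_zero_iff_mem.1 hb)
  exact ⟨t, by simp⟩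

attribute [local instance 100] ZMod.algebra

lemma exists_polySpans_modPFiber_quotient [Algebra.FiniteType ℤ R] (𝔠 : Ideal R) :
    ∃ u M : ℕ, ∀ p [Fact p.Prime] [CharP (modPFiber R p) p], M ≤ p → ∀ e : ℕ,
      ringKrullDim (modPFiber R p ⧸ modPFiberIdeal 𝔠 p) ≤ e →
      ∃ s ≤ e, ∃ (y : Fin s → modPFiber R p ⧸ modPFiberIdeal 𝔠 p)
        (m : Fin u → modPFiber R p ⧸ modPFiberIdeal 𝔠 p), PolySpans (ZMod p) y m := by
  obtain ⟨s, u, z, m, N, hN, hz, h⟩ := exists_polySpansAway ℤ (R ⧸ 𝔠)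
  refine ⟨u, N.natAbs + 1, fun p _ _ hp e he => ?_⟩
  have hNp := algebraMap_int_zmod_ne_zero hN hp
  let φ := Ideal.Quotient.mkₐ ℤ (Ideal.span {(p : R)})
  have hφ : Function.Surjective φ := Ideal.Quotient.mk_surjective
  let ψ : R ⧸ 𝔠 →ₐ[ℤ] modPFiber R p ⧸ modPFiberIdeal 𝔠 p :=
    Ideal.quotientMapₐ (𝔠.map φ) φ Ideal.le_comap_map
  have hψ : Function.Surjective ψ :=
    Ideal.quotientMap_surjective (H := Ideal.le_comap_map) hφ
  refine ⟨s, ?_, ψ ∘ z, ψ ∘ m, h.polySpans_comp hψ hNp⟩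
  rcases hz with rfl | hz
  · exact e.zero_le
  have hdim := h.ringKrullDim_eq hz (Nat.prime_iff_prime_int.1 Fact.out)
    (ZMod.ringHom_surjective _) (by simp) hNp hψ
    (exists_smul_eq_of_quotientMapₐ_eq_zero hφ (exists_smul_eq_of_mk_eq_zero p) 𝔠)
  rw [Fintype.card_fin] at hdim
  exact_mod_cast hdim.symm.trans_le he

lemma exists_finrank_frobeniusPower_sup_le [Algebra.FiniteType ℤ R] (I 𝔠 : Ideal R) (e : ℕ) :
    ∃ C M : ℕ, ∀ p [Fact p.Prime] [CharP (modPFiber R p) p], M ≤ p →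
      Module.Finite (ZMod p) (modPFiber R p ⧸ modPFiberIdeal I p) →
      ringKrullDim (modPFiber R p ⧸ modPFiberIdeal 𝔠 p) ≤ e → ∀ q, 0 < q →
      Module.finrank (ZMod p)
        (modPFiber R p ⧸ ((modPFiberIdeal I p).frobeniusPower q ⊔ modPFiberIdeal 𝔠 p)) ≤
          C * q ^ e := by
  obtain ⟨u, M, hI⟩ := exists_polySpans_modPFiber_quotient I
  obtain ⟨u', M', h𝔠⟩ := exists_polySpans_modPFiber_quotient 𝔠
  refine ⟨u' * (u + 1) ^ e, max M M', fun p _ _ hp hfin he q hq => ?_⟩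
  have hdim : ringKrullDim (modPFiber R p ⧸ modPFiberIdeal I p) ≤ (0 : ℕ) := by
    have := IsArtinianRing.of_finite (ZMod p) (modPFiber R p ⧸ modPFiberIdeal I p)
    exact (Ring.krullDimLE_iff (n := 0)).1 inferInstance
  obtain ⟨s₀, hs₀, _, _, hspan⟩ := hI p (le_of_max_le_left hp) 0 hdim
  obtain rfl := Nat.le_zero.1 hs₀
  have hcolength : Module.finrank (ZMod p) (modPFiber R p ⧸ modPFiberIdeal I p) ≤ u := by
    simpa using hspan.finrank_le (g := 1) (fun i => i.elim0) fun i => i.elim0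
  obtain ⟨s, hs, _, _, hspan⟩ := h𝔠 p (le_of_max_le_right hp) e he
  calc _ ≤ u' * (q * Module.finrank (ZMod p) (modPFiber R p ⧸ modPFiberIdeal I p)) ^ s := by
        simpa using hspan.finrank_quotient_frobeniusPower_sup_le (modPFiberIdeal I p) q
    _ ≤ u' * (q * (u + 1)) ^ s := by gcongr; omega
    _ ≤ u' * (q * (u + 1)) ^ e := by gcongr; exact Nat.mul_pos hq u.succ_pos
    _ = u' * (u + 1) ^ e * q ^ e := by rw [mul_pow]; ring

lemma exists_forall_pow_mul_mem_range_frobMap (R : Type*) [CommRing R] [IsDomain R] [CharZero R]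
    [Algebra.FiniteType ℤ R] :
    ∃ (s : ℕ) (z : Fin s → R) (c : R) (M : ℕ), ∀ p [Fact p.Prime] [CharP (modPFiber R p) p]
      [IsDomain (modPFiber R p)], M ≤ p →
        ringKrullDim (modPFiber R p) = s ∧ algebraMap R (modPFiber R p) c ≠ 0 ∧
        (∀ a, algebraMap R (modPFiber R p) c ^ p * a ∈
          (frobMap p (algebraMap R (modPFiber R p) ∘ z)).range) ∧
        Function.Injective (frobMap p (algebraMap R (modPFiber R p) ∘ z)) := by
  obtain ⟨s, u, z, m, N, hN, hz, h⟩ := exists_polySpansAway ℤ R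
  replace hz : AlgebraicIndependent ℤ z := by
    rcases hz with rfl | hz
    · exact algebraicIndependent_empty_type_iff.2 (algebraMap ℤ R).injective_int
    · exact hz
  choose g hg hroot hdiscr using fun i =>
    exists_monic_eval₂_aeval_eq_zero_discr_ne_zero hz (h.isIntegralElem_sumElim i)
  obtain ⟨M, hM⟩ :=
    exists_forall_map_intCast_ne_zero (Finset.prod_ne_zero_iff.2 fun i _ => hdiscr i)
  refine ⟨s, z, MvPolynomial.aeval z (∏ i, (g i).discr), max M N.natAbs + 1,
    fun p _ _ _ hp => ?_⟩
  have hNp := algebraMap_int_zmod_ne_zero hN (lt_of_le_of_lt (le_max_right M _) hp)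
  let φ : R →ₐ[ℤ] modPFiber R p := Ideal.Quotient.mkₐ ℤ (Ideal.span {(p : R)})
  have hφs : Function.Surjective φ := Ideal.Quotient.mk_surjective
  have hπ : Prime (p : ℤ) := Nat.prime_iff_prime_int.1 Fact.out
  have hk := ZMod.ringHom_surjective (algebraMap ℤ (ZMod p))
  have hπk : algebraMap ℤ (ZMod p) p = 0 := by simp
  have hφ := exists_smul_eq_of_mk_eq_zero (R := R) p
  have hind := h.algebraicIndependent_comp hz hπ hk hπk hNp hφ
  have hc : φ (MvPolynomial.aeval z (∏ i, (g i).discr)) ≠ 0 := fun h0 =>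
    hM p (lt_of_le_of_lt (le_max_left _ _) hp) (hind.eq_zero_of_aeval_eq_zero _
      (by rw [MvPolynomial.aeval_map_algebraMap, ← h0, MvPolynomial.comp_aeval_apply]; rfl))
  have hrange := h.map_prod_discr_pow_mul_mem_range_frobMap hφs hNp hg hroot
  refine ⟨?_, hc, hrange, frobMap_injective hind (h.polySpans_comp hφs hNp).finite hc hrange⟩
  simpa using h.ringKrullDim_eq hz hπ hk hπk hNp hφs hφ

lemma exists_abs_finrank_sub_le [IsDomain R] [CharZero R] [Algebra.FiniteType ℤ R] (I : Ideal R)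
    (d : ℕ) :
    ∃ C M : ℕ, ∀ p [Fact p.Prime] [CharP (modPFiber R p) p] [IsDomain (modPFiber R p)], M ≤ p →
      Module.Finite (ZMod p) (modPFiber R p ⧸ modPFiberIdeal I p) →
      ringKrullDim (modPFiber R p) = (d + 1 : ℕ) → ∀ n : ℕ,
      |(Module.finrank (ZMod p)
          (modPFiber R p ⧸ (modPFiberIdeal I p).frobeniusPower (p ^ (n + 1))) : ℝ) -
        (p : ℝ) ^ (d + 1) * Module.finrank (ZMod p)
          (modPFiber R p ⧸ (modPFiberIdeal I p).frobeniusPower (p ^ n))| ≤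
        2 * C * (p : ℝ) ^ (d + 1) * (p : ℝ) ^ (n * d) := by
  obtain ⟨s, z, c, M, hM⟩ := exists_forall_pow_mul_mem_range_frobMap R
  obtain ⟨C, M', hC⟩ := exists_finrank_frobeniusPower_sup_le I (Ideal.span {c}) d
  refine ⟨C, max M M', fun p _ _ _ hp hfin hdim n => ?_⟩
  obtain ⟨hs, hc, hrange, hinj⟩ := hM p (le_of_max_le_left hp)
  obtain rfl : s = d + 1 := by exact_mod_cast hs.symm.trans hdim
  have hspan : modPFiberIdeal (Ideal.span {c}) p =
      Ideal.span {algebraMap R (modPFiber R p) c} := by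
    rw [modPFiberIdeal, Ideal.map_span, Set.image_singleton]
    rfl
  have hdim_c : ringKrullDim (modPFiber R p ⧸ modPFiberIdeal (Ideal.span {c}) p) ≤ d := by
    have hle := ringKrullDim_quotient_succ_le_of_nonZeroDivisor (mem_nonZeroDivisors_of_ne_zero hc)
    rw [hdim, ← hspan] at hle
    exact (WithBot.add_le_add_iff_right' (c := 1) (by decide) (by decide)).1 (by exact_mod_cast hle)
  have : Algebra.FiniteType (ZMod p) (modPFiber R p) :=
    .of_restrictScalars_finiteType ℤ (ZMod p) (modPFiber R p)
  have hbound (n : ℕ) : (Module.finrank (ZMod p) (modPFiber R p ⧸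
      ((modPFiberIdeal I p).frobeniusPower (p ^ n) ⊔
        Ideal.span {algebraMap R (modPFiber R p) c})) : ℝ) ≤ C * ((p : ℝ) ^ n) ^ d := by
    rw [← hspan]
    exact_mod_cast hC p (le_of_max_le_right hp) hfin hdim_c (p ^ n)
      (pow_pos (Fact.out : p.Prime).pos n)
  have h := abs_finrank_quotient_frobeniusPower_sub_le p hrange hinj
    ((modPFiberIdeal I p).frobeniusPower (p ^ n))
  rw [frobeniusPower_frobeniusPower, Fintype.card_fin] at h
  calc _ ≤ _ := h
    _ ≤ p * (C * ((p : ℝ) ^ (n + 1)) ^ d) + (p : ℝ) ^ (d + 1) * (C * ((p : ℝ) ^ n) ^ d) := by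
        gcongr <;> exact hbound _
    _ = 2 * C * (p : ℝ) ^ (d + 1) * (p : ℝ) ^ (n * d) := by ring

lemma fiberColength_eq (p : ℕ) [h : CharP (modPFiber R p) p] (J : Ideal (modPFiber R p)) :
    fiberColength p J = Module.finrank (ZMod p) (modPFiber R p ⧸ J) := by
  rw [fiberColength, dif_pos h]

lemma isDomain_of_modPFiberGeomIntegral {p : ℕ} [Fact p.Prime] [CharP (modPFiber R p) p]
    (h : ModPFiberGeomIntegral R p) : IsDomain (modPFiber R p) := by
  have : IsDomain (TensorProduct (ZMod p) (AlgebraicClosure (ZMod p)) (modPFiber R p)) := h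
  let ι : modPFiber R p →ₐ[ZMod p] TensorProduct (ZMod p) (AlgebraicClosure (ZMod p)) _ :=
    Algebra.TensorProduct.includeRight
  have hι : Function.Injective ι := Algebra.TensorProduct.includeRight_injective
    (algebraMap (ZMod p) (AlgebraicClosure (ZMod p))).injective
  exact hι.isDomain ι.toRingHom

end Fibers

section Limit

open scoped Topology

lemma abs_sub_div_pow_le_of_recursion {a : ℕ → ℝ} {e C q : ℝ} {d : ℕ} (hq : 1 < q)
    (ha : ∀ n, |a (n + 1) - q ^ (d + 1) * a n| ≤ C * q ^ (d + 1) * q ^ (n * d))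
    (he : Tendsto (fun n => a n / q ^ (n * (d + 1))) atTop (𝓝 e)) (m : ℕ) :
    |e - a m / q ^ (m * (d + 1))| ≤ C * q⁻¹ ^ m / (1 - q⁻¹) := by
  have : 0 < q := one_pos.trans hq
  have hstep (n : ℕ) :
      dist (a n / q ^ (n * (d + 1))) (a (n + 1) / q ^ ((n + 1) * (d + 1))) ≤ C * q⁻¹ ^ n := by
    have hdiff : a (n + 1) / q ^ ((n + 1) * (d + 1)) - a n / q ^ (n * (d + 1)) =
        (a (n + 1) - q ^ (d + 1) * a n) / q ^ ((n + 1) * (d + 1)) := by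
      field_simp
      ring
    rw [dist_comm, Real.dist_eq, hdiff, abs_div, abs_of_pos (by positivity : 0 < q ^ _),
      div_le_iff₀ (by positivity)]
    refine (ha n).trans_eq ?_
    rw [inv_pow]
    field_simp
    ring
  rw [← Real.dist_eq, dist_comm]
  exact dist_le_of_le_geometric_of_tendsto q⁻¹ C (inv_lt_one_of_one_lt₀ hq) hstep he m

lemma tendstoPrimes_iff_tendsto {g : ℕ → ℝ} {L : ℝ} :
    TendstoPrimes g L ↔ Tendsto g (atTop ⊓ 𝓟 {p | p.Prime}) (𝓝 L) := by
  simp only [TendstoPrimes, Metric.tendsto_nhds, eventually_inf_principal, eventually_atTop,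
    Set.mem_ofPred_eq, Real.dist_eq]
  exact forall₂_congr fun ε _ => exists_congr fun N => forall_congr' fun p => forall_comm

lemma tendstoPrimes_sub_zero_and_iff_of_abs_sub_le {f g b : ℕ → ℝ} {N : ℕ}
    (h : ∀ p, p.Prime → N ≤ p → |f p - g p| ≤ b p) (hb : Tendsto b atTop (𝓝 0)) :
    TendstoPrimes (fun p => f p - g p) 0 ∧ ∀ L, TendstoPrimes f L ↔ TendstoPrimes g L := by
  simp only [tendstoPrimes_iff_tendsto]
  have hsub : Tendsto (fun p => f p - g p) (atTop ⊓ 𝓟 {p | p.Prime}) (𝓝 0) :=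
    squeeze_zero_norm' (eventually_inf_principal.2
      (eventually_atTop.2 ⟨N, fun p hN hp => h p hp hN⟩)) (hb.mono_left inf_le_left)
  exact ⟨hsub, fun L => tendsto_iff_of_dist (by simpa [Real.dist_eq] using hsub.abs)⟩

lemma tendsto_mul_inv_pow_div_one_sub_inv (C : ℝ) {m : ℕ} (hm : m ≠ 0) :
    Tendsto (fun p : ℕ => C * (p : ℝ)⁻¹ ^ m / (1 - (p : ℝ)⁻¹)) atTop (𝓝 0) := by
  have hinv : Tendsto (fun p : ℕ => (p : ℝ)⁻¹) atTop (𝓝 0) := tendsto_inv_atTop_nhds_zero_nat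
  have h := ((hinv.pow m).const_mul C).div (tendsto_const_nhds.sub hinv) (by simp : (1 : ℝ) - 0 ≠ 0)
  rwa [zero_pow hm, mul_zero, zero_div] at h

end Limit

end HilbertKunz

open HilbertKunz in
theorem fiber_eHK_limit_eq_fiber_colength_limit_general
    (R : Type*) [CommRing R] [IsDomain R] [CharZero R] [Algebra.FiniteType ℤ R]
    (I : Ideal R) (d : ℕ) (hd : 1 ≤ d) (N₀ : ℕ)
    (hchar : ∀ p : ℕ, p.Prime → N₀ ≤ p → CharP (modPFiber R p) p)
    (hdom : ∀ p : ℕ, p.Prime → N₀ ≤ p → IsDomain (modPFiber R p))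
    (hdim : ∀ p : ℕ, p.Prime → N₀ ≤ p → ringKrullDim (modPFiber R p) = d)
    (hfin : ∀ p : ℕ, (hp : p.Prime) → (hN : N₀ ≤ p) →
      haveI := hchar p hp hN
      letI : Algebra (ZMod p) (modPFiber R p) := ZMod.algebra _ p
      Module.Finite (ZMod p) (modPFiber R p ⧸ modPFiberIdeal I p))
    (eHK : ℕ → ℝ)
    (heHK : ∀ p : ℕ, p.Prime → N₀ ≤ p →
      Tendsto
        (fun n : ℕ =>
          (fiberColength p ((modPFiberIdeal I p).frobeniusPower (p ^ n)) : ℝ) /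
            (p : ℝ) ^ (n * d))
        atTop (nhds (eHK p)))
    (m : ℕ) (hm : 1 ≤ m) :
    TendstoPrimes
      (fun p =>
        eHK p -
          (fiberColength p ((modPFiberIdeal I p).frobeniusPower (p ^ m)) : ℝ) /
            (p : ℝ) ^ (m * d)) 0 ∧
    (∀ L : ℝ,
      TendstoPrimes eHK L ↔
        TendstoPrimes
          (fun p =>
            (fiberColength p ((modPFiberIdeal I p).frobeniusPower (p ^ m)) : ℝ) /
              (p : ℝ) ^ (m * d)) L) := by
  obtain ⟨d, rfl⟩ := Nat.exists_eq_add_of_le' hd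
  obtain ⟨C, M, hC⟩ := exists_abs_finrank_sub_le I d
  refine tendstoPrimes_sub_zero_and_iff_of_abs_sub_le (N := max N₀ M) (fun p hp hpM => ?_)
    (tendsto_mul_inv_pow_div_one_sub_inv (2 * C) (Nat.one_le_iff_ne_zero.1 hm))
  have hN := le_of_max_le_left hpM
  have : Fact p.Prime := ⟨hp⟩
  have := hchar p hp hN
  have := hdom p hp hN
  refine abs_sub_div_pow_le_of_recursion (by exact_mod_cast hp.one_lt) (fun n => ?_)
    (heHK p hp hN) m
  rw [fiberColength_eq, fiberColength_eq]
  exact hC p (le_of_max_le_right hpM) (hfin p hp hN) (hdim p hp hN) n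

theorem fiber_eHK_limit_eq_fiber_colength_limit
    (R : Type*) [CommRing R] [IsDomain R] [CharZero R]
    (hfg : Algebra.FiniteType ℤ R)
    (𝒜 : ℕ → Submodule ℤ R) [GradedAlgebra 𝒜]
    -- `R` is generated in degree 1 over `R₀`
    (hgen : Algebra.adjoin ℤ ((𝒜 0 : Set R) ∪ (𝒜 1 : Set R)) = ⊤)
    (I : Ideal R) (hIhom : I.IsHomogeneous 𝒜) (hIne : I ≠ ⊤)
    (d : ℕ) (hd : 2 ≤ d)
    -- for almost all primes `p` (say `p ≥ N₀`) the fiber `R_p` has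
    -- characteristic `p`, is a standard graded ring of dimension `d` which is
    -- geometrically integral, and `I_p ⊂ R_p` has finite colength:
    (N₀ : ℕ)
    (hchar : ∀ p : ℕ, p.Prime → N₀ ≤ p → CharP (modPFiber R p) p)
    (hstd : ∀ p : ℕ, (hp : p.Prime) → (hN : N₀ ≤ p) →
      IsField (Subring.closure ((Ideal.Quotient.mk _) '' (𝒜 0 : Set R)) :
        Subring (modPFiber R p)))
    (hdim : ∀ p : ℕ, (hp : p.Prime) → (hN : N₀ ≤ p) →
      ringKrullDim (modPFiber R p) = d)
    (hgeom : ∀ p : ℕ, (hp : p.Prime) → (hN : N₀ ≤ p) →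
      haveI : Fact p.Prime := ⟨hp⟩
      haveI := hchar p hp hN
      ModPFiberGeomIntegral R p)
    (hfin : ∀ p : ℕ, (hp : p.Prime) → (hN : N₀ ≤ p) →
      haveI := hchar p hp hN
      letI : Algebra (ZMod p) (modPFiber R p) := ZMod.algebra _ p
      Module.Finite (ZMod p) (modPFiber R p ⧸ modPFiberIdeal I p))
    -- `eHK p` is the Hilbert–Kunz multiplicity of `(R_p, I_p)` for almost all `p`
    (eHK : ℕ → ℝ)
    (heHK : ∀ p : ℕ, p.Prime → N₀ ≤ p →
      Tendsto
        (fun n : ℕ =>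
          (fiberColength p ((modPFiberIdeal I p).frobeniusPower (p ^ n)) : ℝ) /
            (p : ℝ) ^ (n * d))
        atTop (nhds (eHK p)))
    (m : ℕ) (hm : d - 1 ≤ m) :
    -- `lim_{p→∞} (e_HK(R_p,I_p) − ℓ(R_p/I_p^{[pᵐ]})/p^{md}) = 0` …
    TendstoPrimes
      (fun p =>
        eHK p -
          (fiberColength p ((modPFiberIdeal I p).frobeniusPower (p ^ m)) : ℝ) /
            (p : ℝ) ^ (m * d)) 0 ∧
    -- … hence the two limits exist simultaneously and are then equal
    (∀ L : ℝ,
      TendstoPrimes eHK L ↔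
        TendstoPrimes
          (fun p =>
            (fiberColength p ((modPFiberIdeal I p).frobeniusPower (p ^ m)) : ℝ) /
              (p : ℝ) ^ (m * d)) L) := by
  have hdom (p : ℕ) (hp : p.Prime) (hN : N₀ ≤ p) : IsDomain (modPFiber R p) := by
    have : Fact p.Prime := ⟨hp⟩
    have := hchar p hp hN
    exact HilbertKunz.isDomain_of_modPFiberGeomIntegral (hgeom p hp hN)
  exact fiber_eHK_limit_eq_fiber_colength_limit_general R I d (by omega) N₀ hchar hdom hdim hfin
    eHK heHK m (by omega)
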